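/- arXiv:2602.05357 — 2 statements merged into one kernel-verified Lean document; each statement's English description precedes it below -/
import Mathlib

section
/- Let θ : ℝⁿ → [−∞,+∞] be a symmetric, lower semicontinuous function that is subdifferentially regular at every point of its domain, and let X ∈ Sⁿ be such that θ(λ(X)) is finite and ∂θ(λ(X)) ≠ ∅. Then for every H ∈ Sⁿ, the subderivative of the spectral function g = θ∘λ satisfies d(θ∘λ)(X)(H) = dθ(λ(X))(λ'(X;H)). -/
open Filter Topology Matrix

noncomputable section

namespace SpecPaper

/-! ## Generic variational analysis definitions over a topological real vector space -/

variable {E : Type*}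

section Generic

variable [AddCommGroup E] [Module ℝ E] [TopologicalSpace E]

/-- `f x` is finite (neither `+∞` nor `-∞`). -/
def IsFiniteAt (f : E → EReal) (x : E) : Prop :=
  f x ≠ ⊤ ∧ f x ≠ ⊥

/-- The norm induced by a given inner product. -/
noncomputable def nrm (ip : E → E → ℝ) (x : E) : ℝ :=
  Real.sqrt (ip x x)

/-- The subderivative `df(x)(w)`. -/
noncomputable def subderiv (f : E → EReal) (x w : E) : EReal :=
  Filter.liminf (fun p : ℝ × E => (((p.1)⁻¹ : ℝ) : EReal) * (f (x + p.1 • p.2) - f x))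
    ((nhdsWithin (0 : ℝ) (Set.Ioi 0)) ×ˢ nhds w)

/-- The second-order difference quotient `Δ²ₜ f(x,v)(w)`. -/
noncomputable def sdq2 (ip : E → E → ℝ) (f : E → EReal) (x v : E) (t : ℝ) (w : E) : EReal :=
  (((2 / t ^ 2) : ℝ) : EReal) * (f (x + t • w) - f x - ((t * ip v w : ℝ) : EReal))

/-- The second subderivative `d²f(x,v)(w)`. -/
noncomputable def subderiv2 (ip : E → E → ℝ) (f : E → EReal) (x v w : E) : EReal :=
  Filter.liminf (fun p : ℝ × E => sdq2 ip f x v p.1 p.2)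
    ((nhdsWithin (0 : ℝ) (Set.Ioi 0)) ×ˢ nhds w)

/-- Twice epi-differentiability of `f` at `x` for `v`. -/
def TwiceEpiDiff (ip : E → E → ℝ) (f : E → EReal) (x v : E) : Prop :=
  IsFiniteAt f x ∧
    ∀ t : ℕ → ℝ, (∀ k, 0 < t k) → Tendsto t atTop (nhds 0) →
      ∀ w : E, ∃ ws : ℕ → E, Tendsto ws atTop (nhds w) ∧
        Tendsto (fun k => sdq2 ip f x v (t k) (ws k)) atTop (nhds (subderiv2 ip f x v w))

/-- `v` is a regular subgradient of `f` at `x`. -/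
def RegSubgrad (ip : E → E → ℝ) (f : E → EReal) (x v : E) : Prop :=
  IsFiniteAt f x ∧
    (0 : EReal) ≤ Filter.liminf
      (fun y : E =>
        (((nrm ip (y - x))⁻¹ : ℝ) : EReal) * (f y - f x - ((ip v (y - x) : ℝ) : EReal)))
      (nhdsWithin x {x}ᶜ)

/-- `v` is a (limiting) subgradient of `f` at `x`. -/
def LimSubgrad (ip : E → E → ℝ) (f : E → EReal) (x v : E) : Prop :=
  ∃ xs vs : ℕ → E, (∀ k, RegSubgrad ip f (xs k) (vs k)) ∧
    Tendsto xs atTop (nhds x) ∧ Tendsto vs atTop (nhds v) ∧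
    Tendsto (fun k => f (xs k)) atTop (nhds (f x))

/-- The tangent cone to `C` at `x`. -/
def tangentCone (C : Set E) (x : E) : Set E :=
  {w | ∃ (t : ℕ → ℝ) (ws : ℕ → E), (∀ k, 0 < t k) ∧ Tendsto t atTop (nhds 0) ∧
    Tendsto ws atTop (nhds w) ∧ ∀ k, x + t k • ws k ∈ C}

/-- The regular normal cone to `C` at `x`. -/
def regNormalCone (ip : E → E → ℝ) (C : Set E) (x : E) : Set E :=
  {v | ∀ w ∈ tangentCone C x, ip v w ≤ 0}

/-- The limiting normal cone to `C` at `x`. -/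
def limNormalCone (ip : E → E → ℝ) (C : Set E) (x : E) : Set E :=
  {v | ∃ xs vs : ℕ → E, (∀ k, xs k ∈ C) ∧ (∀ k, vs k ∈ regNormalCone ip C (xs k)) ∧
    Tendsto xs atTop (nhds x) ∧ Tendsto vs atTop (nhds v)}

/-- The critical cone `C_f(x,v)`. -/
def criticalCone (ip : E → E → ℝ) (f : E → EReal) (x v : E) : Set E :=
  {w | subderiv f x w = ((ip v w : ℝ) : EReal)}

/-- `f` is locally Lipschitz continuous at `x` relative to its domain. -/
def LocLipAtRelDom (ip : E → E → ℝ) (f : E → EReal) (x : E) : Prop :=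
  IsFiniteAt f x ∧
    ∃ V ∈ nhds x, ∃ ℓ : ℝ, 0 ≤ ℓ ∧
      ∀ a ∈ V, ∀ b ∈ V, f a ≠ ⊤ → f b ≠ ⊤ →
        f a ≠ ⊥ ∧ f b ≠ ⊥ ∧ |(f a).toReal - (f b).toReal| ≤ ℓ * nrm ip (a - b)

/-- `f` is locally Lipschitz continuous relative to its domain. -/
def LocLipRelDom (ip : E → E → ℝ) (f : E → EReal) : Prop :=
  ∀ x : E, f x ≠ ⊤ → LocLipAtRelDom ip f x

/-- `v` is a proximal subgradient of `f` at `x`. -/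
def ProxSubgrad (ip : E → E → ℝ) (f : E → EReal) (x v : E) : Prop :=
  IsFiniteAt f x ∧
    ∃ r > (0 : ℝ), ∃ ε > (0 : ℝ), ∀ x' : E, nrm ip (x' - x) ≤ ε →
      f x + ((ip v (x' - x) - r / 2 * ip (x' - x) (x' - x) : ℝ) : EReal) ≤ f x'

/-- `f` is prox-regular at `x` for `v`. -/
def ProxRegularAtFor (ip : E → E → ℝ) (f : E → EReal) (x v : E) : Prop :=
  IsFiniteAt f x ∧
    (∃ δ > (0 : ℝ), LowerSemicontinuousOn f {x' | nrm ip (x' - x) < δ}) ∧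
    ∃ ε > (0 : ℝ), ∃ r : ℝ, 0 ≤ r ∧
      ∀ x₁ v₁ : E, LimSubgrad ip f x₁ v₁ → nrm ip (x₁ - x) < ε → nrm ip (v₁ - v) < ε →
        f x₁ < f x + (ε : EReal) →
        ∀ x' : E, nrm ip (x' - x) < ε →
          f x₁ + ((ip v₁ (x' - x₁) - r / 2 * ip (x' - x₁) (x' - x₁) : ℝ) : EReal) ≤ f x'

/-- `f` is prox-regular at `x` (for every subgradient). -/
def ProxRegularAt (ip : E → E → ℝ) (f : E → EReal) (x : E) : Prop :=
  ∀ v : E, LimSubgrad ip f x v → ProxRegularAtFor ip f x v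

/-- `f` is subdifferentially continuous at `x`. -/
def SubdiffContAt (ip : E → E → ℝ) (f : E → EReal) (x : E) : Prop :=
  ∀ v : E, LimSubgrad ip f x v →
    ∀ xs vs : ℕ → E, (∀ k, LimSubgrad ip f (xs k) (vs k)) →
      Tendsto xs atTop (nhds x) → Tendsto vs atTop (nhds v) →
      Tendsto (fun k => f (xs k)) atTop (nhds (f x))

/-- `f` is prox-bounded. -/
def ProxBounded (ip : E → E → ℝ) (f : E → EReal) : Prop :=
  ∃ α c : ℝ, ∀ x : E, (c : EReal) ≤ f x + ((α * ip x x : ℝ) : EReal)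

/-- The proximal mapping (as a set of minimizers). -/
def proxSet (ip : E → E → ℝ) (f : E → EReal) (γ : ℝ) (x : E) : Set E :=
  {w | ∀ w' : E,
    f w + ((1 / (2 * γ) * ip (w - x) (w - x) : ℝ) : EReal) ≤
      f w' + ((1 / (2 * γ) * ip (w' - x) (w' - x) : ℝ) : EReal)}

/-- The proximal map of `f` with parameter `γ` is single-valued around `z` and the resulting
map is directionally differentiable at `z`. -/
def ProxSingleDirDiff (ip : E → E → ℝ) (f : E → EReal) (γ : ℝ) (z : E) : Prop :=
  ∃ V ∈ nhds z, ∃ P : E → E, (∀ u ∈ V, proxSet ip f γ u = {P u}) ∧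
    ∀ h : E, ∃ L : E,
      Tendsto (fun t : ℝ => t⁻¹ • (P (z + t • h) - P z)) (nhdsWithin 0 (Set.Ioi 0)) (nhds L)

/-- The parabolic difference quotient. -/
noncomputable def parabQuot (f : E → EReal) (x w : E) (t : ℝ) (z : E) : EReal :=
  (((2 / t ^ 2) : ℝ) : EReal) *
    (f (x + t • w + (t ^ 2 / 2) • z) - f x - ((t * (subderiv f x w).toReal : ℝ) : EReal))

/-- The parabolic subderivative `d²f(x)(w | z)`. -/
noncomputable def parabSubderiv (f : E → EReal) (x w z : E) : EReal :=
  Filter.liminf (fun p : ℝ × E => parabQuot f x w p.1 p.2)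
    ((nhdsWithin (0 : ℝ) (Set.Ioi 0)) ×ˢ nhds z)

/-- `f` is parabolically epi-differentiable at `x` for `w`. -/
def ParabEpiDiff (f : E → EReal) (x w : E) : Prop :=
  (∃ z : E, parabSubderiv f x w z < ⊤) ∧
    ∀ t : ℕ → ℝ, (∀ k, 0 < t k) → Tendsto t atTop (nhds 0) →
      ∀ z : E, ∃ zs : ℕ → E, Tendsto zs atTop (nhds z) ∧
        Tendsto (fun k => parabQuot f x w (t k) (zs k)) atTop (nhds (parabSubderiv f x w z))

/-- `φ` is a generalized quadratic form: its domain is a linear subspace and on the domain it is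
given by a symmetric linear operator. -/
def IsGQF (ip : E → E → ℝ) (φ : E → EReal) : Prop :=
  (φ 0 ≠ ⊤) ∧
  (∀ x y : E, φ x ≠ ⊤ → φ y ≠ ⊤ → φ (x + y) ≠ ⊤) ∧
  (∀ (c : ℝ) (x : E), φ x ≠ ⊤ → φ (c • x) ≠ ⊤) ∧
  ∃ L : E → E,
    (∀ x y : E, φ x ≠ ⊤ → φ y ≠ ⊤ → L (x + y) = L x + L y) ∧
    (∀ (c : ℝ) (x : E), φ x ≠ ⊤ → L (c • x) = c • L x) ∧
    (∀ x y : E, φ x ≠ ⊤ → φ y ≠ ⊤ → ip (L x) y = ip x (L y)) ∧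
    (∀ x : E, φ x ≠ ⊤ → φ x = ((ip (L x) x : ℝ) : EReal))

/-- `f` is generalized twice differentiable at `x` for `v`. -/
def GenTwiceDiff (ip : E → E → ℝ) (f : E → EReal) (x v : E) : Prop :=
  TwiceEpiDiff ip f x v ∧ IsGQF ip (subderiv2 ip f x v)

/-- Proto-differentiability of a set-valued map `F` at `x` for `y ∈ F x`. -/
def ProtoDiff (F : E → Set E) (x y : E) : Prop :=
  ∀ w η : E, (w, η) ∈ tangentCone {p : E × E | p.2 ∈ F p.1} (x, y) →
    ∀ t : ℕ → ℝ, (∀ k, 0 < t k) → Tendsto t atTop (nhds 0) →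
      ∃ ws ηs : ℕ → E, Tendsto ws atTop (nhds w) ∧ Tendsto ηs atTop (nhds η) ∧
        ∀ k, y + t k • ηs k ∈ F (x + t k • ws k)

/-- Relative interior of a set (interior relative to its affine hull). -/
def relInterior (C : Set E) : Set E :=
  {y | y ∈ C ∧ ∃ V ∈ nhds y, ∀ z ∈ V, z ∈ affineSpan ℝ C → z ∈ C}

/-- A polyhedral set: the intersection of finitely many closed half-spaces. -/
def IsPolyhedral (ip : E → E → ℝ) (C : Set E) : Prop :=
  ∃ (k : ℕ) (a : Fin k → E) (b : Fin k → ℝ), C = {x | ∀ j : Fin k, ip (a j) x ≤ b j}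

/-- The subdifferential of a convex function. -/
def convexSubdiff (ip : E → E → ℝ) (f : E → EReal) (x : E) : Set E :=
  {v | ∀ z : E, f x + ((ip v (z - x) : ℝ) : EReal) ≤ f z}

/-- The natural inner product on `E × ℝ`. -/
def ipProd (ip : E → E → ℝ) : E × ℝ → E × ℝ → ℝ :=
  fun p q => ip p.1 q.1 + p.2 * q.2

/-- The epigraph of `f`. -/
def epiSet (f : E → EReal) : Set (E × ℝ) :=
  {p | f p.1 ≤ (p.2 : EReal)}

/-- `f` is subdifferentially regular at `x`. -/
def SubdiffRegularAt (ip : E → E → ℝ) (f : E → EReal) (x : E) : Prop :=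
  IsFiniteAt f x ∧
    regNormalCone (ipProd ip) (epiSet f) (x, (f x).toReal) =
      limNormalCone (ipProd ip) (epiSet f) (x, (f x).toReal)

/-! Real-valued versions: semidifferentiability, gradients. -/

/-- `f` is semidifferentiable at `x`. -/
def SemiDiffAt (f : E → ℝ) (x : E) : Prop :=
  ∀ w : E, ∃ d : ℝ,
    Tendsto (fun p : ℝ × E => (p.1)⁻¹ * (f (x + p.1 • p.2) - f x))
      ((nhdsWithin (0 : ℝ) (Set.Ioi 0)) ×ˢ nhds w) (nhds d)

/-- The (real value of the) subderivative of a real-valued function. -/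
noncomputable def dReal (f : E → ℝ) (x w : E) : ℝ :=
  (subderiv (fun y => ((f y : ℝ) : EReal)) x w).toReal

/-- The second-order difference quotient built from the subderivative. -/
noncomputable def sdq2R (f : E → ℝ) (x : E) (t : ℝ) (w : E) : ℝ :=
  (2 / t ^ 2) * (f (x + t • w) - f x - t * dReal f x w)

/-- `f` is twice semidifferentiable at `x`. -/
def TwiceSemiDiffAt (f : E → ℝ) (x : E) : Prop :=
  SemiDiffAt f x ∧
    ∀ w : E, ∃ d : ℝ,
      Tendsto (fun p : ℝ × E => sdq2R f x p.1 p.2)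
        ((nhdsWithin (0 : ℝ) (Set.Ioi 0)) ×ˢ nhds w) (nhds d)

/-- The second semiderivative `d²f(x)(w)` (the liminf; it is the full limit whenever `f` is
twice semidifferentiable at `x`). -/
noncomputable def secondSemiDeriv (f : E → ℝ) (x w : E) : EReal :=
  Filter.liminf (fun p : ℝ × E => ((sdq2R f x p.1 p.2 : ℝ) : EReal))
    ((nhdsWithin (0 : ℝ) (Set.Ioi 0)) ×ˢ nhds w)

/-- `f` is (Fréchet) differentiable at `x` with gradient `g` (w.r.t. inner product `ip`). -/
def HasGradAt (ip : E → E → ℝ) (f : E → ℝ) (x g : E) : Prop :=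
  Tendsto (fun y : E => (nrm ip (y - x))⁻¹ * (f y - f x - ip g (y - x)))
    (nhdsWithin x {x}ᶜ) (nhds 0)

/-- `f` is locally Lipschitz continuous around `x`. -/
def LocLipAt (ip : E → E → ℝ) (f : E → ℝ) (x : E) : Prop :=
  ∃ V ∈ nhds x, ∃ ℓ : ℝ, 0 ≤ ℓ ∧ ∀ a ∈ V, ∀ b ∈ V, |f a - f b| ≤ ℓ * nrm ip (a - b)

/-- `f` is twice differentiable at `x` with gradient map `G` near `x` and second derivative
(the derivative of `G` at `x`) given by the linear map `Dxx`. -/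
def HasSecondDerivAt (ip : E → E → ℝ) (f : E → EReal) (x : E) (G : E → E) (Dxx : E → E) :
    Prop :=
  ∃ V ∈ nhds x, ∃ fr : E → ℝ,
    (∀ z ∈ V, f z = ((fr z : ℝ) : EReal)) ∧
    (∀ z ∈ V, HasGradAt ip fr z (G z)) ∧
    IsLinearMap ℝ Dxx ∧
    Tendsto (fun z : E => (nrm ip (z - x))⁻¹ • (G z - G x - Dxx (z - x)))
      (nhdsWithin x {x}ᶜ) (nhds 0)

/-- `f` is twice differentiable at `x`. -/
def TwiceDiffAt (ip : E → E → ℝ) (f : E → EReal) (x : E) : Prop :=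
  ∃ G Dxx : E → E, HasSecondDerivAt ip f x G Dxx

end Generic

/-! ## Eigenvalues and spectral machinery -/

open scoped Classical in
/-- The eigenvalues of a real symmetric matrix, arranged in nonincreasing order
(junk value `0` if the matrix is not symmetric). -/
noncomputable def eigval {n : ℕ} (X : Matrix (Fin n) (Fin n) ℝ) : Fin n → ℝ :=
  if h : X.IsHermitian then
    fun i => h.eigenvalues (Tuple.sort (fun j => -h.eigenvalues j) i)
  else 0

/-- `Oⁿ(X)`: orthogonal matrices realizing the ordered spectral decomposition of `X`. -/
def eigOrth {n : ℕ} (X : Matrix (Fin n) (Fin n) ℝ) : Set (Matrix (Fin n) (Fin n) ℝ) :=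
  {U | U * Uᵀ = 1 ∧ X = U * Matrix.diagonal (eigval X) * Uᵀ}

open scoped Classical in
/-- The block `α_m` of indices `j` whose eigenvalue `λ_j(X)` equals `λ_i(X)`. -/
noncomputable def blockSet {n : ℕ} (X : Matrix (Fin n) (Fin n) ℝ) (i : Fin n) :
    Finset (Fin n) :=
  Finset.univ.filter fun j => eigval X j = eigval X i

lemma mem_blockSet_self {n : ℕ} (X : Matrix (Fin n) (Fin n) ℝ) (i : Fin n) :
    i ∈ blockSet X i := by
  simp [blockSet]

/-- The increasing enumeration of the block of `i`. -/
noncomputable def blockEmb {n : ℕ} (X : Matrix (Fin n) (Fin n) ℝ) (i : Fin n) :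
    Fin (blockSet X i).card → Fin n :=
  fun a => ((blockSet X i).orderIsoOfFin rfl a : Fin n)

/-- The position of `i` inside its own block. -/
noncomputable def blockIdx {n : ℕ} (X : Matrix (Fin n) (Fin n) ℝ) (i : Fin n) :
    Fin (blockSet X i).card :=
  ((blockSet X i).orderIsoOfFin rfl).symm ⟨i, mem_blockSet_self X i⟩

/-- The principal submatrix of `M` corresponding to the block of `i` (for `X`). -/
noncomputable def blockMat {n : ℕ} (X M : Matrix (Fin n) (Fin n) ℝ) (i : Fin n) :
    Matrix (Fin (blockSet X i).card) (Fin (blockSet X i).card) ℝ :=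
  Matrix.of fun a b => M (blockEmb X i a) (blockEmb X i b)

/-- The directional derivative `λ'(X;H)` of the ordered eigenvalue map, computed through
`U ∈ Oⁿ(X)`: blockwise ordered eigenvalues of `U_{α_m}ᵀ H U_{α_m}`. -/
noncomputable def lambdaDir {n : ℕ} (X U H : Matrix (Fin n) (Fin n) ℝ) : Fin n → ℝ :=
  fun i => eigval (blockMat X (Uᵀ * H * U) i) (blockIdx X i)

open scoped Classical in
/-- The Moore–Penrose pseudoinverse of a square real matrix, characterized by the four
Penrose equations. -/
noncomputable def pinv {n : ℕ} (A : Matrix (Fin n) (Fin n) ℝ) :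
    Matrix (Fin n) (Fin n) ℝ :=
  if h : ∃ B : Matrix (Fin n) (Fin n) ℝ,
      A * B * A = A ∧ B * A * B = B ∧ (A * B)ᵀ = A * B ∧ (B * A)ᵀ = B * A
  then h.choose else 0

/-- The curvature term `2 ∑ₘ ⟨Diag(y)_{αₘαₘ}, U_{αₘ}ᵀ H (μₘ I - X)† H U_{αₘ}⟩`, written as a
single sum over all indices. -/
noncomputable def curvTerm {n : ℕ} (X U H : Matrix (Fin n) (Fin n) ℝ) (y : Fin n → ℝ) : ℝ :=
  2 * ∑ i : Fin n, y i *
    (Uᵀ * (H * pinv (eigval X i • (1 : Matrix (Fin n) (Fin n) ℝ) - X) * H) * U) i i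

/-- Two symmetric matrices admit a simultaneous ordered spectral decomposition. -/
def simOrdSpec {k : ℕ} (A B : Matrix (Fin k) (Fin k) ℝ) : Prop :=
  ∃ P : Matrix (Fin k) (Fin k) ℝ, P * Pᵀ = 1 ∧
    A = P * Matrix.diagonal (eigval A) * Pᵀ ∧
    B = P * Matrix.diagonal (eigval B) * Pᵀ

/-- The subspace of symmetric `n × n` real matrices. -/
def symSubmodule (n : ℕ) : Submodule ℝ (Matrix (Fin n) (Fin n) ℝ) where
  carrier := {A | A.IsSymm}
  add_mem' := by
    intro a b ha hb
    simp only [Set.mem_setOf_eq, Matrix.IsSymm] at *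
    rw [Matrix.transpose_add, ha, hb]
  zero_mem' := by
    simp only [Set.mem_setOf_eq, Matrix.IsSymm, Matrix.transpose_zero]
  smul_mem' := by
    intro c a ha
    simp only [Set.mem_setOf_eq, Matrix.IsSymm] at *
    rw [Matrix.transpose_smul, ha]

/-- The space `Sⁿ` of symmetric `n × n` real matrices. -/
abbrev Sym (n : ℕ) : Type := ↥(symSubmodule n)

/-- The trace inner product `⟨A, B⟩ = tr(AB)` on `Sⁿ`. -/
noncomputable def ipM {n : ℕ} (A B : Sym n) : ℝ :=
  ((A : Matrix (Fin n) (Fin n) ℝ) * (B : Matrix (Fin n) (Fin n) ℝ)).trace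

/-- The Euclidean inner product on `ℝⁿ`. -/
def ipV {n : ℕ} (v w : Fin n → ℝ) : ℝ :=
  ∑ i, v i * w i

/-- The spectral function `g = θ ∘ λ` on `Sⁿ`. -/
noncomputable def specFn {n : ℕ} (θ : (Fin n → ℝ) → EReal) : Sym n → EReal :=
  fun A => θ (eigval (A : Matrix (Fin n) (Fin n) ℝ))

/-- A function on `ℝⁿ` is symmetric (permutation invariant). -/
def SymmetricFn {n : ℕ} {α : Type*} (θ : (Fin n → ℝ) → α) : Prop :=
  ∀ (x : Fin n → ℝ) (σ : Equiv.Perm (Fin n)), θ (fun i => x (σ i)) = θ x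

/-- The diagonal matrix `Diag(w)` as an element of `Sⁿ`. -/
noncomputable def diagSym {n : ℕ} (w : Fin n → ℝ) : Sym n :=
  ⟨Matrix.diagonal w, Matrix.isSymm_diagonal w⟩

/-- The `i`-th order statistic: `orderStat x i` is the `i`-th largest entry of `x`. -/
noncomputable def orderStat {n : ℕ} (x : Fin n → ℝ) : Fin n → ℝ :=
  fun i => x (Tuple.sort (fun j => -x j) i)


/-! ## Eigenvalue perturbation -/

lemma quad_diag {n : ℕ} (P : Matrix (Fin n) (Fin n) ℝ) (a x : Fin n → ℝ) :
    x ⬝ᵥ ((P * Matrix.diagonal a * Pᵀ) *ᵥ x) = ∑ j, a j * ((Pᵀ *ᵥ x) j) ^ 2 := by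
  rw [← Matrix.mulVec_mulVec, ← Matrix.mulVec_mulVec, Matrix.dotProduct_mulVec,
    ← Matrix.mulVec_transpose]
  simp only [dotProduct, Matrix.mulVec_diagonal]
  exact Finset.sum_congr rfl fun j _ => by ring

lemma quad_one {n : ℕ} (P : Matrix (Fin n) (Fin n) ℝ) (hP : P * Pᵀ = 1) (x : Fin n → ℝ) :
    ∑ j, ((Pᵀ *ᵥ x) j) ^ 2 = x ⬝ᵥ x := by
  have := quad_diag P (fun _ => 1) x
  simp only [Matrix.diagonal_one, mul_one, hP, Matrix.one_mulVec, one_mul] at this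
  exact this.symm

lemma weyl_core {n : ℕ} (P Q : Matrix (Fin n) (Fin n) ℝ) (hP : P * Pᵀ = 1) (hQ : Q * Qᵀ = 1)
    (a b : Fin n → ℝ) (ha : Antitone a) (hb : Antitone b) (c : ℝ)
    (h : ∀ x : Fin n → ℝ, x ⬝ᵥ ((P * Matrix.diagonal a * Pᵀ) *ᵥ x) ≤
      x ⬝ᵥ ((Q * Matrix.diagonal b * Qᵀ) *ᵥ x) + c * (x ⬝ᵥ x)) (i : Fin n) :
    a i ≤ b i + c := by
  have hP' : Pᵀ * P = 1 := mul_eq_one_comm.mp hP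
  let f : (Fin n → ℝ) →ₗ[ℝ] ({j : Fin n // j ≠ i} → ℝ) :=
    LinearMap.pi fun j => if i < j.1 then LinearMap.proj j.1 ∘ₗ (Pᵀ).mulVecLin
      else LinearMap.proj j.1 ∘ₗ (Qᵀ).mulVecLin
  have hker : LinearMap.ker f ≠ ⊥ := by
    apply LinearMap.ker_ne_bot_of_finrank_lt
    rw [Module.finrank_fintype_fun_eq_card, Module.finrank_fintype_fun_eq_card]
    exact Fintype.card_subtype_lt (x := i) (by simp)
  obtain ⟨x, hx, hx0⟩ := (Submodule.ne_bot_iff _).mp hker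
  have hpos : 0 < x ⬝ᵥ x := by
    have h0 : x ⬝ᵥ x ≠ 0 := by simpa [dotProduct_self_eq_zero] using hx0
    have h1 : 0 ≤ x ⬝ᵥ x := Finset.sum_nonneg fun j _ => mul_self_nonneg _
    exact lt_of_le_of_ne h1 (Ne.symm h0)
  have hfx : ∀ j : {j : Fin n // j ≠ i}, f x j = 0 := fun j => by
    rw [LinearMap.mem_ker.mp hx]; rfl
  have h1 : ∀ j, i < j → (Pᵀ *ᵥ x) j = 0 := fun j hj => by
    have := hfx ⟨j, hj.ne'⟩
    simpa [f, LinearMap.pi_apply, hj, Matrix.mulVec_transpose] using this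
  have h2 : ∀ j, j < i → (Qᵀ *ᵥ x) j = 0 := fun j hj => by
    have := hfx ⟨j, hj.ne⟩
    simpa [f, LinearMap.pi_apply, not_lt.mpr hj.le, Matrix.mulVec_transpose] using this
  have hx' := h x
  rw [quad_diag, quad_diag] at hx'
  have e1 : a i * (x ⬝ᵥ x) ≤ ∑ j, a j * ((Pᵀ *ᵥ x) j) ^ 2 := by
    rw [← quad_one P hP, Finset.mul_sum]
    refine Finset.sum_le_sum fun j _ => ?_
    rcases lt_or_ge i j with hj | hj
    · rw [h1 j hj]; simp
    · exact mul_le_mul_of_nonneg_right (ha hj) (sq_nonneg _)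
  have e2 : ∑ j, b j * ((Qᵀ *ᵥ x) j) ^ 2 ≤ b i * (x ⬝ᵥ x) := by
    rw [← quad_one Q hQ, Finset.mul_sum]
    refine Finset.sum_le_sum fun j _ => ?_
    rcases lt_or_ge j i with hj | hj
    · rw [h2 j hj]; simp
    · exact mul_le_mul_of_nonneg_right (hb hj) (sq_nonneg _)
  have : a i * (x ⬝ᵥ x) ≤ (b i + c) * (x ⬝ᵥ x) := by linarith
  exact le_of_mul_le_mul_right this hpos

lemma eigval_antitone {n : ℕ} (A : Matrix (Fin n) (Fin n) ℝ) : Antitone (eigval A) := by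
  unfold eigval
  split_ifs with h
  · intro i j hij
    have := Tuple.monotone_sort (fun j => -h.eigenvalues j) hij
    simpa using this
  · exact antitone_const

lemma conj_perm {n : ℕ} (P : Matrix (Fin n) (Fin n) ℝ) (v : Fin n → ℝ)
    (σ : Equiv.Perm (Fin n)) :
    P.submatrix id σ * Matrix.diagonal (fun i => v (σ i)) * (P.submatrix id σ)ᵀ =
      P * Matrix.diagonal v * Pᵀ := by
  have : Matrix.diagonal (fun i => v (σ i)) = (Matrix.diagonal v).submatrix σ σ := by
    rw [Matrix.submatrix_diagonal_equiv]; rfl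
  rw [this, Matrix.transpose_submatrix, Matrix.submatrix_mul_equiv, Matrix.submatrix_mul_equiv,
    Matrix.submatrix_id_id]

lemma eigOrth_nonempty {n : ℕ} (A : Matrix (Fin n) (Fin n) ℝ) (hA : A.IsSymm) :
    ∃ P, P ∈ eigOrth A := by
  have h : A.IsHermitian := by
    rw [Matrix.IsHermitian, Matrix.conjTranspose_eq_transpose_of_trivial]; exact hA
  let W : Matrix (Fin n) (Fin n) ℝ := h.eigenvectorUnitary
  have hW : W * Wᵀ = 1 := by
    have := Unitary.coe_mul_star_self h.eigenvectorUnitary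
    rwa [Unitary.coe_star, Matrix.star_eq_conjTranspose,
      Matrix.conjTranspose_eq_transpose_of_trivial] at this
  have hs : A = W * Matrix.diagonal h.eigenvalues * Wᵀ := by
    have := h.spectral_theorem
    rw [Unitary.conjStarAlgAut_apply, Matrix.star_eq_conjTranspose,
      Matrix.conjTranspose_eq_transpose_of_trivial] at this
    exact this
  let σ := Tuple.sort (fun j => -h.eigenvalues j)
  refine ⟨W.submatrix id σ, ?_, ?_⟩
  · have := conj_perm W (fun _ => 1) σ
    simpa [hW] using this
  · have e : eigval A = fun i => h.eigenvalues (σ i) := by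
      unfold eigval; rw [dif_pos h]
    rw [e, conj_perm]; exact hs

lemma eigval_eq_of_antitone {n : ℕ} (A P : Matrix (Fin n) (Fin n) ℝ) (v : Fin n → ℝ)
    (hP : P * Pᵀ = 1) (hv : Antitone v) (hA : A = P * Matrix.diagonal v * Pᵀ) :
    eigval A = v := by
  have hs : A.IsSymm := by
    rw [hA, Matrix.IsSymm]; simp [Matrix.transpose_mul, Matrix.mul_assoc]
  obtain ⟨Q, hQ, hQA⟩ := eigOrth_nonempty A hs
  funext i
  apply le_antisymm
  · have := weyl_core Q P hQ hP _ _ (eigval_antitone A) hv 0 (fun x => by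
      rw [← hQA, ← hA]; simp) i
    simpa using this
  · have := weyl_core P Q hP hQ _ _ hv (eigval_antitone A) 0 (fun x => by
      rw [← hQA, ← hA]; simp) i
    simpa using this

lemma eigval_conj_diag {n : ℕ} (P : Matrix (Fin n) (Fin n) ℝ) (v : Fin n → ℝ)
    (hP : P * Pᵀ = 1) :
    ∃ σ : Equiv.Perm (Fin n), eigval (P * Matrix.diagonal v * Pᵀ) = fun i => v (σ i) := by
  let σ := Tuple.sort (fun j => -v j)
  refine ⟨σ, eigval_eq_of_antitone _ (P.submatrix id σ) _ ?_ ?_ ?_⟩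
  · have := conj_perm P (fun _ => 1) σ
    simpa [hP] using this
  · intro i j hij
    have := Tuple.monotone_sort (fun j => -v j) hij
    simpa using this
  · exact (conj_perm P v σ).symm

lemma eigval_conj {n : ℕ} (A V : Matrix (Fin n) (Fin n) ℝ) (hA : A.IsSymm) (hV : V * Vᵀ = 1) :
    eigval (V * A * Vᵀ) = eigval A := by
  obtain ⟨P, hP, hPA⟩ := eigOrth_nonempty A hA
  refine eigval_eq_of_antitone _ (V * P) _ ?_ (eigval_antitone A) ?_
  · rw [Matrix.transpose_mul, Matrix.mul_assoc, ← Matrix.mul_assoc P, hP, Matrix.one_mul, hV]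
  · conv_lhs => rw [hPA]
    simp only [Matrix.transpose_mul, Matrix.mul_assoc]

lemma quad_bound {n : ℕ} (E : Matrix (Fin n) (Fin n) ℝ) (x : Fin n → ℝ) :
    x ⬝ᵥ (E *ᵥ x) ≤ (∑ j, ∑ k, |E j k|) * (x ⬝ᵥ x) := by
  have hle : ∀ j, x j * x j ≤ x ⬝ᵥ x := fun j =>
    Finset.single_le_sum (f := fun j => x j * x j) (fun j _ => mul_self_nonneg _)
      (Finset.mem_univ j)
  have : x ⬝ᵥ (E *ᵥ x) = ∑ j, ∑ k, E j k * (x j * x k) := by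
    simp only [dotProduct, Matrix.mulVec, Finset.mul_sum]
    exact Finset.sum_congr rfl fun j _ => Finset.sum_congr rfl fun k _ => by ring
  rw [this, Finset.sum_mul]
  refine Finset.sum_le_sum fun j _ => ?_
  rw [Finset.sum_mul]
  refine Finset.sum_le_sum fun k _ => ?_
  have h1 : |x j * x k| ≤ x ⬝ᵥ x := by
    rw [abs_le]
    constructor <;> nlinarith [hle j, hle k, sq_nonneg (x j + x k), sq_nonneg (x j - x k)]
  calc E j k * (x j * x k) ≤ |E j k * (x j * x k)| := le_abs_self _
    _ = |E j k| * |x j * x k| := abs_mul _ _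
    _ ≤ _ := mul_le_mul_of_nonneg_left h1 (abs_nonneg _)

lemma weyl_le {n : ℕ} (A B : Matrix (Fin n) (Fin n) ℝ) (hA : A.IsSymm) (hB : B.IsSymm)
    (i : Fin n) : eigval A i ≤ eigval B i + ∑ j, ∑ k, |(A - B) j k| := by
  obtain ⟨P, hP, hPA⟩ := eigOrth_nonempty A hA
  obtain ⟨Q, hQ, hQB⟩ := eigOrth_nonempty B hB
  refine weyl_core P Q hP hQ _ _ (eigval_antitone A) (eigval_antitone B) _ (fun x => ?_) i
  rw [← hPA, ← hQB]
  have := quad_bound (A - B) x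
  rw [Matrix.sub_mulVec, dotProduct_sub] at this
  linarith

lemma weyl_abs {n : ℕ} (A B : Matrix (Fin n) (Fin n) ℝ) (hA : A.IsSymm) (hB : B.IsSymm)
    (i : Fin n) : |eigval A i - eigval B i| ≤ ∑ j, ∑ k, |(A - B) j k| := by
  have h1 := weyl_le A B hA hB i
  have h2 := weyl_le B A hB hA i
  have h3 : ∑ j, ∑ k, |(B - A) j k| = ∑ j, ∑ k, |(A - B) j k| :=
    Finset.sum_congr rfl fun j _ => Finset.sum_congr rfl fun k _ => abs_sub_comm _ _
  rw [abs_le]; constructor <;> linarith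

/-- Principal submatrix on a finset. -/
def subMat {n : ℕ} (K : Matrix (Fin n) (Fin n) ℝ) (s : Finset (Fin n)) :
    Matrix (Fin s.card) (Fin s.card) ℝ :=
  Matrix.of fun a b => K (s.orderIsoOfFin rfl a : Fin n) (s.orderIsoOfFin rfl b : Fin n)

open scoped Classical in
/-- Ordered eigenvalues of the principal submatrix, indexed by the elements of the finset. -/
def subEv {n : ℕ} (K : Matrix (Fin n) (Fin n) ℝ) (s : Finset (Fin n)) (l : Fin n) : ℝ :=
  if h : l ∈ s then eigval (subMat K s) ((s.orderIsoOfFin rfl).symm ⟨l, h⟩) else 0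

lemma subEv_anti {n : ℕ} (K : Matrix (Fin n) (Fin n) ℝ) (s : Finset (Fin n)) {i j : Fin n}
    (hi : i ∈ s) (hj : j ∈ s) (hij : i ≤ j) : subEv K s j ≤ subEv K s i := by
  unfold subEv
  rw [dif_pos hi, dif_pos hj]
  apply eigval_antitone
  exact (s.orderIsoOfFin rfl).symm.monotone hij

lemma sum_orderIso {n : ℕ} (s : Finset (Fin n)) (f : Fin n → ℝ) :
    ∑ j ∈ s, f j = ∑ a : Fin s.card, f (s.orderIsoOfFin rfl a : Fin n) := by
  rw [← Finset.sum_coe_sort s f]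
  exact ((s.orderIsoOfFin rfl).toEquiv.sum_comp (fun j => f j)).symm

lemma exists_blockG {n : ℕ} (K : Matrix (Fin n) (Fin n) ℝ) (hK : K.IsSymm)
    (s : Finset (Fin n)) :
    ∃ G : Fin n → Fin n → ℝ,
      (∀ k ∈ s, ∀ l ∈ s, ∑ j ∈ s, G j k * G j l = if k = l then 1 else 0) ∧
      (∀ j ∈ s, ∀ l ∈ s, ∑ k ∈ s, K j k * G k l = G j l * subEv K s l) := by
  classical
  have hs : (subMat K s).IsSymm := by
    ext a b
    simp only [subMat, Matrix.transpose_apply, Matrix.of_apply]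
    exact hK.apply _ _
  obtain ⟨Q, hQ, hQA⟩ := eigOrth_nonempty _ hs
  have hQ' : Qᵀ * Q = 1 := mul_eq_one_comm.mp hQ
  let e := s.orderIsoOfFin rfl
  let G : Fin n → Fin n → ℝ := fun j l =>
    if h : j ∈ s ∧ l ∈ s then Q (e.symm ⟨j, h.1⟩) (e.symm ⟨l, h.2⟩) else 0
  have hG : ∀ a b, G (e a : Fin n) (e b : Fin n) = Q a b := fun a b => by
    have : (e a : Fin n) ∈ s ∧ (e b : Fin n) ∈ s := ⟨(e a).2, (e b).2⟩
    simp only [G, dif_pos this, Subtype.coe_eta, OrderIso.symm_apply_apply]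
  have hsurj : ∀ k ∈ s, ∃ a, (e a : Fin n) = k := fun k hk =>
    ⟨e.symm ⟨k, hk⟩, by simp⟩
  refine ⟨G, ?_, ?_⟩
  · intro k hk l hl
    obtain ⟨a, rfl⟩ := hsurj k hk
    obtain ⟨b, rfl⟩ := hsurj l hl
    rw [sum_orderIso]
    change ∑ c, G (e c : Fin n) (e a) * G (e c : Fin n) (e b) = _
    simp only [hG]
    have := congrFun (congrFun hQ' a) b
    rw [Matrix.mul_apply] at this
    simp only [Matrix.transpose_apply, Matrix.one_apply] at this
    rw [this]
    have hab : ((e a : Fin n) = (e b : Fin n)) ↔ a = b := by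
      rw [Subtype.coe_inj, e.injective.eq_iff]
    simp only [hab]
  · intro j hj l hl
    obtain ⟨a, rfl⟩ := hsurj j hj
    obtain ⟨b, rfl⟩ := hsurj l hl
    rw [sum_orderIso]
    change ∑ c, subMat K s a c * G (e c : Fin n) (e b) = _
    simp only [hG]
    have hev : subEv K s (e b) = eigval (subMat K s) b := by
      unfold subEv
      rw [dif_pos hl]
      congr 1
      exact e.symm_apply_apply b
    rw [hev]
    have h1 : subMat K s * Q = Q * Matrix.diagonal (eigval (subMat K s)) := by
      conv_lhs => rw [hQA]
      rw [Matrix.mul_assoc, hQ', Matrix.mul_one]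
    have := congrFun (congrFun h1 a) b
    rw [Matrix.mul_diagonal, Matrix.mul_apply] at this
    exact this

open scoped Classical in
/-- The block-diagonal part of `K` along the level sets of `lam`. -/
def blkDiag {n : ℕ} (lam : Fin n → ℝ) (K : Matrix (Fin n) (Fin n) ℝ) :
    Matrix (Fin n) (Fin n) ℝ :=
  Matrix.of fun j k => if lam j = lam k then K j k else 0

lemma blkDiag_decomp {n : ℕ} (X K : Matrix (Fin n) (Fin n) ℝ) (hK : K.IsSymm) :
    ∃ P : Matrix (Fin n) (Fin n) ℝ, P * Pᵀ = 1 ∧ ∀ t : ℝ,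
      Matrix.diagonal (eigval X) + t • blkDiag (eigval X) K =
        P * Matrix.diagonal (fun i => eigval X i + t * subEv K (blockSet X i) i) * Pᵀ := by
  classical
  choose G hG1 hG2 using exists_blockG K hK
  have hmem : ∀ j k, j ∈ blockSet X k ↔ eigval X j = eigval X k := fun j k => by
    simp [blockSet]
  have hbs : ∀ j k, eigval X j = eigval X k → blockSet X j = blockSet X k := fun j k h => by
    simp [blockSet, h]
  let P : Matrix (Fin n) (Fin n) ℝ := Matrix.of fun j k =>
    if j ∈ blockSet X k then G (blockSet X k) j k else 0
  have hP0 : ∀ j k, P j k = if j ∈ blockSet X k then G (blockSet X k) j k else 0 :=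
    fun _ _ => rfl
  have hPP : Pᵀ * P = 1 := by
    ext k l
    rw [Matrix.mul_apply, Matrix.one_apply]
    simp only [Matrix.transpose_apply, hP0]
    by_cases hkl : eigval X k = eigval X l
    · rw [hbs k l hkl, ← hG1 (blockSet X l) k ((hmem k l).2 hkl) l (mem_blockSet_self X l)]
      rw [← Finset.sum_filter_add_sum_filter_not Finset.univ (· ∈ blockSet X l)]
      rw [Finset.filter_mem_eq_inter, Finset.univ_inter]
      have h0 : ∑ x with x ∉ blockSet X l, ((if x ∈ blockSet X l then G (blockSet X l) x k else 0) *
          if x ∈ blockSet X l then G (blockSet X l) x l else 0) = 0 := by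
        refine Finset.sum_eq_zero fun x hx => ?_
        rw [if_neg (Finset.mem_filter.mp hx).2]; simp
      rw [h0, add_zero]
      exact Finset.sum_congr rfl fun x hx => by rw [if_pos hx, if_pos hx]
    · have hne : k ≠ l := fun h => hkl (by rw [h])
      rw [if_neg hne]
      refine Finset.sum_eq_zero fun x _ => ?_
      by_cases h1 : x ∈ blockSet X k
      · have h2 : x ∉ blockSet X l := fun h2 =>
          hkl (((hmem _ _).1 h1).symm.trans ((hmem _ _).1 h2))
        rw [if_neg h2, mul_zero]
      · rw [if_neg h1, zero_mul]
  have hDP : blkDiag (eigval X) K * P =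
      P * Matrix.diagonal (fun i => subEv K (blockSet X i) i) := by
    ext j l
    rw [Matrix.mul_diagonal, Matrix.mul_apply]
    simp only [hP0, blkDiag, Matrix.of_apply]
    by_cases hjl : eigval X j = eigval X l
    · rw [if_pos ((hmem j l).2 hjl), ← hG2 (blockSet X l) j ((hmem j l).2 hjl) l
        (mem_blockSet_self X l)]
      rw [← Finset.sum_filter_add_sum_filter_not Finset.univ (· ∈ blockSet X l)]
      rw [Finset.filter_mem_eq_inter, Finset.univ_inter]
      have h0 : ∑ x with x ∉ blockSet X l, ((if eigval X j = eigval X x then K j x else 0) *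
          if x ∈ blockSet X l then G (blockSet X l) x l else 0) = 0 := by
        refine Finset.sum_eq_zero fun x hx => ?_
        rw [if_neg (Finset.mem_filter.mp hx).2, mul_zero]
      rw [h0, add_zero]
      exact Finset.sum_congr rfl fun x hx => by
        rw [if_pos hx, if_pos (hjl.trans ((hmem x l).1 hx).symm)]
    · rw [if_neg (fun h => hjl ((hmem j l).1 h)), zero_mul]
      refine Finset.sum_eq_zero fun x _ => ?_
      by_cases h1 : x ∈ blockSet X l
      · rw [if_neg (fun h => hjl (h.trans ((hmem x l).1 h1))), zero_mul]
      · rw [if_neg h1, mul_zero]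
  have hLP : Matrix.diagonal (eigval X) * P = P * Matrix.diagonal (eigval X) := by
    ext j l
    rw [Matrix.mul_diagonal, Matrix.diagonal_mul]
    simp only [hP0]
    by_cases hjl : eigval X j = eigval X l
    · rw [hjl, mul_comm]
    · rw [if_neg (fun h => hjl ((hmem j l).1 h))]; simp
  have hPP' : P * Pᵀ = 1 := mul_eq_one_comm.mp hPP
  refine ⟨P, hPP', fun t => ?_⟩
  have hd : Matrix.diagonal (fun i => eigval X i + t * subEv K (blockSet X i) i) =
      Matrix.diagonal (eigval X) + t • Matrix.diagonal (fun i => subEv K (blockSet X i) i) := by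
    rw [← Matrix.diagonal_smul, Matrix.diagonal_add]; rfl
  rw [hd, Matrix.mul_add, Matrix.mul_smul, ← hDP, ← hLP, ← Matrix.smul_mul, ← Matrix.add_mul, Matrix.mul_assoc, hPP',
    Matrix.mul_one]

lemma symm_smul_add {n : ℕ} (A B : Matrix (Fin n) (Fin n) ℝ) (hA : A.IsSymm) (hB : B.IsSymm)
    (t : ℝ) : (A + t • B).IsSymm := hA.add (hB.smul t)

lemma eventually_eigval_block {n : ℕ} (X K : Matrix (Fin n) (Fin n) ℝ) (hK : K.IsSymm) :
    ∀ᶠ t in 𝓝[>] (0 : ℝ),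
      eigval (Matrix.diagonal (eigval X) + t • blkDiag (eigval X) K) =
        fun i => eigval X i + t * subEv K (blockSet X i) i := by
  obtain ⟨P, hP, hdec⟩ := blkDiag_decomp X K hK
  have hanti : ∀ᶠ t in 𝓝[>] (0 : ℝ), ∀ i j : Fin n, i ≤ j →
      eigval X j + t * subEv K (blockSet X j) j ≤ eigval X i + t * subEv K (blockSet X i) i := by
    rw [Filter.eventually_all]; intro i
    rw [Filter.eventually_all]; intro j
    by_cases hij : i ≤ j
    · rcases lt_or_eq_of_le (eigval_antitone X hij) with h | h
      · have hc : ∀ l, Tendsto (fun t : ℝ => eigval X l + t * subEv K (blockSet X l) l)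
            (𝓝[>] 0) (𝓝 (eigval X l)) := fun l => by
          have : Continuous fun t : ℝ => eigval X l + t * subEv K (blockSet X l) l := by fun_prop
          have h2 := this.tendsto 0
          simp only [zero_mul, add_zero] at h2
          exact h2.mono_left nhdsWithin_le_nhds
        filter_upwards [(hc j).eventually_lt (hc i) h] with t ht _ using ht.le
      · have hb : blockSet X j = blockSet X i := by simp [blockSet, h]
        filter_upwards [self_mem_nhdsWithin] with t ht _
        have ht : 0 < t := ht
        rw [h, hb]
        have := subEv_anti K (blockSet X i) (mem_blockSet_self X i)
          (hb ▸ mem_blockSet_self X j) hij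
        have := mul_le_mul_of_nonneg_left this ht.le
        linarith
    · exact Eventually.of_forall fun _ h => absurd h hij
  filter_upwards [hanti] with t ht
  exact eigval_eq_of_antitone _ P _ hP (fun i j hij => ht i j hij) (hdec t)

lemma hasDerivAt_conj_gen {R : Type*} [NormedRing R] [NormedAlgebra ℝ R] [CompleteSpace R]
    (L K S : R) :
    Tendsto (fun t : ℝ => t⁻¹ •
      (NormedSpace.exp (t • (-S)) * (L + t • K) * NormedSpace.exp (t • S) - L))
      (𝓝[>] 0) (𝓝 (-S * L + K + L * S)) := by
  have h1 : HasDerivAt (fun t : ℝ => NormedSpace.exp (t • (-S))) (-S) 0 := by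
    simpa using hasDerivAt_exp_smul_const (𝕂 := ℝ) (-S) (0 : ℝ)
  have h2 : HasDerivAt (fun t : ℝ => NormedSpace.exp (t • S)) S 0 := by
    simpa using hasDerivAt_exp_smul_const (𝕂 := ℝ) S (0 : ℝ)
  have h3 : HasDerivAt (fun t : ℝ => L + t • K) K 0 := by
    have := ((hasDerivAt_id (0 : ℝ)).smul_const K).const_add L
    rw [one_smul] at this
    exact this
  have h4 := (h1.mul h3).mul h2
  have h5 := h4.tendsto_slope_zero_right
  simpa using h5

lemma hasDerivAt_conj {n : ℕ} (L K S : Matrix (Fin n) (Fin n) ℝ) :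
    Tendsto (fun t : ℝ => t⁻¹ •
      (NormedSpace.exp (t • (-S)) * (L + t • K) * NormedSpace.exp (t • S) - L))
      (𝓝[>] 0) (𝓝 (-S * L + K + L * S)) := by
  let i1 : NormedRing (Matrix (Fin n) (Fin n) ℝ) := Matrix.linftyOpNormedRing
  let i2 : NormedAlgebra ℝ (Matrix (Fin n) (Fin n) ℝ) := Matrix.linftyOpNormedAlgebra
  have : CompleteSpace (Matrix (Fin n) (Fin n) ℝ) := FiniteDimensional.complete ℝ _
  exact hasDerivAt_conj_gen L K S

lemma exp_orth {n : ℕ} (S : Matrix (Fin n) (Fin n) ℝ) (hS : Sᵀ = -S) (t : ℝ) :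
    (NormedSpace.exp (t • (-S)))ᵀ = NormedSpace.exp (t • S) ∧
    NormedSpace.exp (t • (-S)) * (NormedSpace.exp (t • (-S)))ᵀ = 1 := by
  have h1 : (NormedSpace.exp (t • (-S)))ᵀ = NormedSpace.exp (t • S) := by
    rw [← Matrix.exp_transpose, Matrix.transpose_smul, Matrix.transpose_neg, hS, neg_neg]
  refine ⟨h1, ?_⟩
  rw [h1, ← Matrix.exp_add_of_commute]
  · simp
  · rw [smul_neg]; exact (Commute.refl _).neg_left

lemma eigval_dir_diag {n : ℕ} (X K : Matrix (Fin n) (Fin n) ℝ) (hK : K.IsSymm) (i : Fin n) :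
    Tendsto (fun t : ℝ => t⁻¹ * (eigval (Matrix.diagonal (eigval X) + t • K) i - eigval X i))
      (𝓝[>] 0) (𝓝 (subEv K (blockSet X i) i)) := by
  classical
  set lam := eigval X with hlam
  let L := Matrix.diagonal lam
  let D := blkDiag lam K
  let S : Matrix (Fin n) (Fin n) ℝ := Matrix.of fun j k => K j k / (lam k - lam j)
  have hS : Sᵀ = -S := by
    ext j k
    simp only [S, Matrix.transpose_apply, Matrix.of_apply, Matrix.neg_apply]
    rw [hK.apply j k, ← neg_sub (lam k) (lam j), div_neg]
  have hD : -S * L + K + L * S = D := by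
    ext j k
    simp only [L, S, D, blkDiag, Matrix.add_apply, Matrix.mul_diagonal, Matrix.diagonal_mul,
      Matrix.of_apply, Matrix.neg_apply]
    split_ifs with h
    · simp [h]
    · have : lam k - lam j ≠ 0 := sub_ne_zero.mpr (Ne.symm h)
      field_simp
      ring
  have hL : L.IsSymm := Matrix.isSymm_diagonal _
  have hDs : D.IsSymm := by
    ext j k
    simp only [D, blkDiag, Matrix.transpose_apply, Matrix.of_apply, hK.apply j k]
    simp only [eq_comm]
  let f : ℝ → Matrix (Fin n) (Fin n) ℝ := fun t =>
    NormedSpace.exp (t • (-S)) * (L + t • K) * NormedSpace.exp (t • S)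
  have hf := hasDerivAt_conj L K S
  rw [hD] at hf
  have hent : ∀ j k, Tendsto (fun t : ℝ => |(t⁻¹ • (f t - L)) j k - D j k|) (𝓝[>] 0) (𝓝 0) := by
    intro j k
    have h1 := (tendsto_pi_nhds.mp ((tendsto_pi_nhds.mp hf) j)) k
    have h2 := (h1.sub_const (D j k)).abs
    rw [sub_self, abs_zero] at h2
    exact h2
  have hsum : Tendsto (fun t : ℝ => ∑ j, ∑ k, |(t⁻¹ • (f t - L)) j k - D j k|)
      (𝓝[>] 0) (𝓝 0) := by
    have := tendsto_finsetSum Finset.univ fun j _ =>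
      tendsto_finsetSum Finset.univ fun k _ => hent j k
    simpa using this
  rw [tendsto_iff_norm_sub_tendsto_zero]
  refine squeeze_zero' (Eventually.of_forall fun _ => norm_nonneg _) ?_ hsum
  filter_upwards [eventually_eigval_block X K hK, self_mem_nhdsWithin] with t ht htpos
  have htpos : 0 < t := htpos
  obtain ⟨e1, e2⟩ := exp_orth S hS t
  have hft : eigval (f t) = eigval (L + t • K) := by
    have := eigval_conj (L + t • K) _ (symm_smul_add L K hL hK t) e2
    rw [e1] at this
    exact this
  have hfs : (f t).IsSymm := by
    have e3 : (NormedSpace.exp (t • S))ᵀ = NormedSpace.exp (t • (-S)) := by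
      rw [← e1, Matrix.transpose_transpose]
    rw [Matrix.IsSymm]
    simp only [f, Matrix.transpose_mul, e1, e3]
    rw [symm_smul_add L K hL hK t, Matrix.mul_assoc]
  have hw := weyl_abs (f t) (L + t • D) hfs (symm_smul_add L D hL hDs t) i
  rw [hft, ht] at hw
  rw [Real.norm_eq_abs]
  have k1 : t⁻¹ * (eigval (L + t • K) i - lam i) - subEv K (blockSet X i) i =
      t⁻¹ * (eigval (L + t • K) i - (lam i + t * subEv K (blockSet X i) i)) := by
    field_simp; ring
  rw [k1, abs_mul, abs_of_pos (inv_pos.mpr htpos)]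
  refine (mul_le_mul_of_nonneg_left hw (inv_pos.mpr htpos).le).trans (le_of_eq ?_)
  rw [Finset.mul_sum]
  refine Finset.sum_congr rfl fun j _ => ?_
  rw [Finset.mul_sum]
  refine Finset.sum_congr rfl fun k _ => ?_
  rw [← abs_of_pos (inv_pos.mpr htpos), ← abs_mul, abs_of_pos (inv_pos.mpr htpos)]
  congr 1
  simp only [Matrix.sub_apply, Matrix.add_apply, Matrix.smul_apply, smul_eq_mul]
  field_simp
  ring

lemma eigval_dir {n : ℕ} (X U H : Matrix (Fin n) (Fin n) ℝ) (hU : U ∈ eigOrth X)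
    (hH : H.IsSymm) (i : Fin n) :
    Tendsto (fun t : ℝ => t⁻¹ * (eigval (X + t • H) i - eigval X i))
      (𝓝[>] 0) (𝓝 (lambdaDir X U H i)) := by
  obtain ⟨hU1, hX⟩ := hU
  have hK : (Uᵀ * H * U).IsSymm := by
    rw [Matrix.IsSymm]; simp only [Matrix.transpose_mul, Matrix.transpose_transpose]
    rw [hH, Matrix.mul_assoc]
  have h := eigval_dir_diag X (Uᵀ * H * U) hK i
  have e : lambdaDir X U H i = subEv (Uᵀ * H * U) (blockSet X i) i := by
    unfold subEv
    rw [dif_pos (mem_blockSet_self X i)]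
    rfl
  rw [e]
  refine h.congr fun t => ?_
  have : eigval (X + t • H) = eigval (Matrix.diagonal (eigval X) + t • (Uᵀ * H * U)) := by
    rw [← eigval_conj _ U (symm_smul_add _ _ (Matrix.isSymm_diagonal _) hK t) hU1]
    congr 1
    rw [Matrix.mul_add, Matrix.add_mul, ← hX, Matrix.mul_smul, Matrix.smul_mul]
    congr 2
    calc H = (U * Uᵀ) * H * (U * Uᵀ) := by rw [hU1]; simp
      _ = _ := by simp only [Matrix.mul_assoc]
  rw [this]

lemma eigval_semidiff {n : ℕ} (X H : Sym n) (U : Matrix (Fin n) (Fin n) ℝ)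
    (hU : U ∈ eigOrth X.val) :
    Tendsto (fun p : ℝ × Sym n => p.1⁻¹ • (eigval (X + p.1 • p.2).val - eigval X.val))
      ((𝓝[>] 0) ×ˢ 𝓝 H) (𝓝 (lambdaDir X.val U H.val)) := by
  rw [tendsto_pi_nhds]
  intro i
  have h1 : Tendsto (fun p : ℝ × Sym n => p.1⁻¹ * (eigval (X.val + p.1 • H.val) i - eigval X.val i))
      ((𝓝[>] 0) ×ˢ 𝓝 H) (𝓝 (lambdaDir X.val U H.val i)) :=
    (eigval_dir X.val U H.val hU H.2 i).comp tendsto_fst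
  have h2 : Tendsto (fun p : ℝ × Sym n => p.1⁻¹ * (eigval (X + p.1 • p.2).val i -
      eigval (X.val + p.1 • H.val) i)) ((𝓝[>] 0) ×ˢ 𝓝 H) (𝓝 0) := by
    have hs : Tendsto (fun p : ℝ × Sym n => ∑ j, ∑ k, |(p.2.val - H.val) j k|)
        ((𝓝[>] 0) ×ˢ 𝓝 H) (𝓝 0) := by
      have hc : Continuous fun A : Sym n => ∑ j, ∑ k, |(A.val - H.val) j k| := by
        refine continuous_finsetSum _ fun j _ => continuous_finsetSum _ fun k _ => ?_
        have : Continuous fun A : Sym n => A.val j k :=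
          (continuous_apply_apply j k).comp continuous_subtype_val
        exact (this.sub continuous_const).abs
      have := (hc.tendsto H).comp (tendsto_snd (f := 𝓝[>] (0 : ℝ)) (g := 𝓝 H))
      simpa [Function.comp_def] using this
    rw [tendsto_zero_iff_norm_tendsto_zero]
    refine squeeze_zero' (Eventually.of_forall fun _ => norm_nonneg _) ?_ hs
    have hpos : ∀ᶠ p : ℝ × Sym n in (𝓝[>] 0) ×ˢ 𝓝 H, 0 < p.1 :=
      tendsto_fst.eventually self_mem_nhdsWithin
    filter_upwards [hpos] with p hp
    have hw := weyl_abs (X + p.1 • p.2).val (X.val + p.1 • H.val) (X + p.1 • p.2).2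
      (symm_smul_add _ _ X.2 H.2 _) i
    rw [Real.norm_eq_abs, abs_mul, abs_of_pos (inv_pos.mpr hp)]
    refine (mul_le_mul_of_nonneg_left hw (inv_pos.mpr hp).le).trans (le_of_eq ?_)
    rw [Finset.mul_sum]
    refine Finset.sum_congr rfl fun j _ => ?_
    rw [Finset.mul_sum]
    refine Finset.sum_congr rfl fun k _ => ?_
    have e : (X + p.1 • p.2).val - (X.val + p.1 • H.val) = p.1 • (p.2.val - H.val) := by
      rw [Submodule.coe_add, Submodule.coe_smul, add_sub_add_left_eq_sub, smul_sub]
    rw [e, Matrix.smul_apply, smul_eq_mul, abs_mul, abs_of_pos hp, ← mul_assoc,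
      inv_mul_cancel₀ hp.ne', one_mul]
  have h3 := h2.add h1
  rw [zero_add] at h3
  refine h3.congr fun p => ?_
  simp only [Pi.smul_apply, Pi.sub_apply, smul_eq_mul]
  ring

lemma tendsto_lift {n : ℕ} (X H : Sym n) (U : Matrix (Fin n) (Fin n) ℝ)
    (hU : U ∈ eigOrth X.val) :
    ∃ F : ℝ × (Fin n → ℝ) → Sym n,
      Tendsto F ((𝓝[>] 0) ×ˢ 𝓝 (lambdaDir X.val U H.val)) (𝓝 H) ∧
      ∀ p : ℝ × (Fin n → ℝ), 0 < p.1 → ∃ σ : Equiv.Perm (Fin n),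
        eigval (X + p.1 • F p).val = fun i => (eigval X.val + p.1 • p.2) (σ i) := by
  have hex : ∀ t : ℝ, ∃ P, P ∈ eigOrth (X + t • H).val := fun t =>
    eigOrth_nonempty _ (X + t • H).2
  choose V hV using hex
  have hsymm : ∀ t (v : Fin n → ℝ), (V t * Matrix.diagonal v * (V t)ᵀ).IsSymm := fun t v => by
    rw [Matrix.IsSymm]; simp [Matrix.transpose_mul, Matrix.mul_assoc]
  let w := lambdaDir X.val U H.val
  let d : ℝ × (Fin n → ℝ) → (Fin n → ℝ) := fun p =>
    p.2 - p.1⁻¹ • (eigval (X + p.1 • H).val - eigval X.val)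
  let F : ℝ × (Fin n → ℝ) → Sym n := fun p =>
    H + ⟨V p.1 * Matrix.diagonal (d p) * (V p.1)ᵀ, hsymm _ _⟩
  have hVb : ∀ t j k, |V t j k| ≤ 1 := by
    intro t j k
    have h1 := congrFun (congrFun (hV t).1 j) j
    rw [Matrix.mul_apply, Matrix.one_apply_eq] at h1
    have h2 := Finset.single_le_sum (f := fun k => V t j k * (V t)ᵀ k j)
      (fun k _ => mul_self_nonneg _) (Finset.mem_univ k)
    rw [h1] at h2
    exact abs_le_one_iff_mul_self_le_one.mpr h2
  refine ⟨F, ?_, ?_⟩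
  · have hd : Tendsto d ((𝓝[>] 0) ×ˢ 𝓝 w) (𝓝 0) := by
      have h1 : Tendsto (fun t : ℝ => t⁻¹ • (eigval (X + t • H).val - eigval X.val))
          (𝓝[>] 0) (𝓝 w) := by
        rw [tendsto_pi_nhds]
        exact fun i => eigval_dir X.val U H.val hU H.2 i
      have h2 : Tendsto d ((𝓝[>] 0) ×ˢ 𝓝 w) (𝓝 (w - w)) :=
        tendsto_snd.sub (h1.comp tendsto_fst)
      rwa [sub_self] at h2
    rw [tendsto_subtype_rng]
    refine tendsto_pi_nhds.mpr fun j => tendsto_pi_nhds.mpr fun k => ?_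
    have h0 : Tendsto (fun p => (V p.1 * Matrix.diagonal (d p) * (V p.1)ᵀ) j k)
        ((𝓝[>] 0) ×ˢ 𝓝 w) (𝓝 0) := by
      have hs : Tendsto (fun p => ∑ l, |d p l|) ((𝓝[>] 0) ×ˢ 𝓝 w) (𝓝 0) := by
        have := tendsto_finsetSum Finset.univ fun l _ => ((tendsto_pi_nhds.mp hd) l).abs
        simpa using this
      refine squeeze_zero_norm (fun p => ?_) hs
      rw [Real.norm_eq_abs, Matrix.mul_apply]
      refine (Finset.abs_sum_le_sum_abs _ _).trans (Finset.sum_le_sum fun l _ => ?_)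
      rw [Matrix.mul_diagonal, Matrix.transpose_apply, abs_mul, abs_mul]
      have a1 := hVb p.1 j l
      have a2 := hVb p.1 k l
      calc |V p.1 j l| * |d p l| * |V p.1 k l| ≤ 1 * |d p l| * 1 := by gcongr
        _ = _ := by ring
    have h3 := h0.const_add (H.val j k)
    rw [add_zero] at h3
    exact h3
  · intro p hp
    obtain ⟨σ, hσ⟩ := eigval_conj_diag (V p.1) (eigval X.val + p.1 • p.2) (hV p.1).1
    refine ⟨σ, ?_⟩
    rw [← hσ]
    congr 1
    have e : eigval X.val + p.1 • p.2 = eigval (X + p.1 • H).val + p.1 • d p := by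
      funext i
      simp only [d, Pi.add_apply, Pi.smul_apply, Pi.sub_apply, smul_eq_mul]
      field_simp
      ring
    have e' : Matrix.diagonal (eigval (X + p.1 • H).val + p.1 • d p) =
        Matrix.diagonal (eigval (X + p.1 • H).val) + Matrix.diagonal (p.1 • d p) :=
      (Matrix.diagonal_add _ _).symm
    rw [e, e', Matrix.mul_add, Matrix.add_mul, ← (hV p.1).2,
      Matrix.diagonal_smul, Matrix.mul_smul, Matrix.smul_mul]
    simp only [F, Submodule.coe_add, Submodule.coe_smul, smul_add, add_assoc]

/-- Theorem 2.3: the subderivative of a spectral function `g = θ ∘ λ` at `X`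
is `dθ(λ(X))` applied to `λ'(X;H)`. -/
theorem subderiv_spectral {n : ℕ} (θ : (Fin n → ℝ) → EReal) (X : Sym n)
    (hsym : SymmetricFn θ) (hlsc : LowerSemicontinuous θ)
    (hreg : ∀ x : Fin n → ℝ, θ x ≠ ⊤ → SubdiffRegularAt ipV θ x)
    (hfin : IsFiniteAt θ (eigval X.val))
    (hne : ∃ y : Fin n → ℝ, LimSubgrad ipV θ (eigval X.val) y) :
    ∀ U ∈ eigOrth X.val, ∀ H : Sym n,
      subderiv (specFn θ) X H =
        subderiv θ (eigval X.val) (lambdaDir X.val U H.val) := by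
  intro U hU H
  apply le_antisymm
  · -- upper bound through lifted directions
    obtain ⟨F, hF, hFe⟩ := tendsto_lift X H U hU
    have hG : Tendsto (fun p : ℝ × (Fin n → ℝ) => (p.1, F p))
        ((𝓝[>] 0) ×ˢ 𝓝 (lambdaDir X.val U H.val)) ((𝓝[>] 0) ×ˢ 𝓝 H) :=
      tendsto_fst.prodMk hF
    unfold subderiv
    refine (Filter.liminf_le_liminf_of_le hG).trans ?_
    rw [← Filter.liminf_comp]
    refine le_of_eq (Filter.liminf_congr ?_)
    have hpos : ∀ᶠ p : ℝ × (Fin n → ℝ) in (𝓝[>] 0) ×ˢ 𝓝 (lambdaDir X.val U H.val), 0 < p.1 :=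
      tendsto_fst.eventually self_mem_nhdsWithin
    filter_upwards [hpos] with p hp
    obtain ⟨σ, hσ⟩ := hFe p hp
    have h1 : specFn θ (X + p.1 • F p) = θ (eigval X.val + p.1 • p.2) := by
      unfold specFn
      rw [hσ]
      exact hsym _ σ
    simp only [Function.comp, h1]
    rfl
  · -- lower bound through semidifferentiability
    have hG : Tendsto (fun p : ℝ × Sym n =>
        (p.1, p.1⁻¹ • (eigval (X + p.1 • p.2).val - eigval X.val)))
        ((𝓝[>] 0) ×ˢ 𝓝 H) ((𝓝[>] 0) ×ˢ 𝓝 (lambdaDir X.val U H.val)) :=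
      tendsto_fst.prodMk (eigval_semidiff X H U hU)
    unfold subderiv
    refine (Filter.liminf_le_liminf_of_le hG).trans ?_
    rw [← Filter.liminf_comp]
    refine le_of_eq (Filter.liminf_congr ?_)
    have hpos : ∀ᶠ p : ℝ × Sym n in (𝓝[>] 0) ×ˢ 𝓝 H, 0 < p.1 :=
      tendsto_fst.eventually self_mem_nhdsWithin
    filter_upwards [hpos] with p hp
    have h1 : eigval X.val + p.1 • (p.1⁻¹ • (eigval (X + p.1 • p.2).val - eigval X.val)) =
        eigval (X + p.1 • p.2).val := by
      rw [smul_smul, mul_inv_cancel₀ hp.ne', one_smul, add_sub_cancel]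
    simp only [Function.comp, h1]
    rfl

end SpecPaper
end
end

section
/- Let θ : ℝⁿ → [−∞,+∞] be symmetric and let the spectral function g = θ∘λ be lower semicontinuous. Let X ∈ Sⁿ, Y ∈ ∂g(X), and let U ∈ Oⁿ(X) and y ∈ ∂θ(λ(X)) be such that Y = U·Diag(y)·Uᵀ. Let v = Qy for a block-diagonal permutation matrix Q (blocks indexed by α₁,…,α_r) chosen so that each block v_{α_m} has nonincreasing entries. Then for every H ∈ Sⁿ, d²g(X,Y)(H) ≥ d²θ(λ(X),v)(λ'(X;H)) + 2·∑_{m=1}^{r} ⟨Diag(y_{α_m}), U_{α_m}ᵀ·H·(μ_m·I − X)^†·H·U_{α_m}⟩. -/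
open Filter Topology Matrix

noncomputable section

namespace SpecPaper

/-! ## Generic variational analysis definitions over a topological real vector space -/

variable {E : Type*}

lemma exists_spectral {n : ℕ} (A : Matrix (Fin n) (Fin n) ℝ) (h : A.IsHermitian) :
    ∃ P : Matrix (Fin n) (Fin n) ℝ, P * Pᵀ = 1 ∧ A = P * diagonal (eigval A) * Pᵀ := by
  set τ := Tuple.sort (fun j => -h.eigenvalues j) with hτ
  set V : Matrix (Fin n) (Fin n) ℝ := (h.eigenvectorUnitary : Matrix (Fin n) (Fin n) ℝ) with hV
  have hVV : V * Vᵀ = 1 := by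
    have := Unitary.coe_mul_star_self h.eigenvectorUnitary
    simpa [Matrix.star_eq_conjTranspose] using this
  have hA : A = V * diagonal h.eigenvalues * Vᵀ := by
    conv_lhs => rw [h.spectral_theorem]
    rw [Unitary.conjStarAlgAut_apply]
    simp [Matrix.star_eq_conjTranspose, hV]
  refine ⟨V.submatrix id τ, ?_, ?_⟩
  · rw [Matrix.transpose_submatrix, Matrix.submatrix_mul_equiv, hVV]
    simp
  · have he : eigval A = h.eigenvalues ∘ τ := by
      unfold eigval
      rw [dif_pos h]
      rfl
    rw [he, ← Matrix.submatrix_diagonal_equiv, Matrix.submatrix_mul_equiv,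
      Matrix.transpose_submatrix, Matrix.submatrix_mul_equiv, ← hA]
    simp

lemma eigval_unique {n : ℕ} (A P : Matrix (Fin n) (Fin n) ℝ) (w : Fin n → ℝ)
    (hP : P * Pᵀ = 1) (hA : A = P * diagonal w * Pᵀ) (hw : Antitone w) : eigval A = w := by
  have key : ∀ (Q : Matrix (Fin n) (Fin n) ℝ) (u : Fin n → ℝ), Q * Qᵀ = 1 →
      A = Q * diagonal u * Qᵀ → A.charpoly.roots = Multiset.map u Finset.univ.val := by
    intro Q u hQ hAu
    have hQ' : Qᵀ * Q = 1 := mul_eq_one_comm.mp hQ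
    rw [hAu, Matrix.charpoly_mul_comm, ← Matrix.mul_assoc, hQ', Matrix.one_mul,
      Matrix.charpoly_diagonal]
    have := Polynomial.roots_multiset_prod_X_sub_C (Multiset.map u Finset.univ.val)
    rw [Multiset.map_map] at this
    exact this
  have hH : A.IsHermitian := by
    rw [hA]
    unfold Matrix.IsHermitian
    simp [Matrix.conjTranspose_eq_transpose_of_trivial, Matrix.mul_assoc]
  obtain ⟨Q, hQ, hAQ⟩ := exists_spectral A hH
  have h1 := key P w hP hA
  have h2 := key Q _ hQ hAQ
  rw [h1] at h2
  have hperm : (List.ofFn w).Perm (List.ofFn (eigval A)) := by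
    rw [← Multiset.coe_eq_coe]
    simpa [List.ofFn_eq_map] using h2
  have := hperm.eq_of_pairwise (le := fun a b => b ≤ a) (by intros; linarith)
    (by rw [List.pairwise_ofFn]; intro i j hij; exact hw hij.le)
    (by rw [List.pairwise_ofFn]; intro i j hij; exact eigval_antitone A hij.le)
  exact (List.ofFn_injective this).symm

lemma pinv_unique {n : ℕ} (A B : Matrix (Fin n) (Fin n) ℝ)
    (h1 : A * B * A = A) (h2 : B * A * B = B) (h3 : (A * B)ᵀ = A * B) (h4 : (B * A)ᵀ = B * A) :
    pinv A = B := by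
  have hex : ∃ B : Matrix (Fin n) (Fin n) ℝ,
      A * B * A = A ∧ B * A * B = B ∧ (A * B)ᵀ = A * B ∧ (B * A)ᵀ = B * A := ⟨B, h1, h2, h3, h4⟩
  unfold pinv
  rw [dif_pos hex]
  obtain ⟨c1, c2, c3, c4⟩ := hex.choose_spec
  set C := hex.choose
  have e1 : A * C = A * B := by
    calc A * C = (A * C)ᵀ := c3.symm
      _ = (A * B * A * C)ᵀ := by rw [h1]
      _ = ((A * B) * (A * C))ᵀ := by simp only [Matrix.mul_assoc]
      _ = (A * C) * (A * B) := by rw [Matrix.transpose_mul, c3, h3]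
      _ = (A * C * A) * B := by simp only [Matrix.mul_assoc]
      _ = A * B := by rw [c1]
  have e2 : C * A = B * A := by
    calc C * A = (C * A)ᵀ := c4.symm
      _ = (C * (A * B * A))ᵀ := by rw [h1]
      _ = ((C * A) * (B * A))ᵀ := by simp only [Matrix.mul_assoc]
      _ = (B * A) * (C * A) := by rw [Matrix.transpose_mul, c4, h4]
      _ = B * (A * C * A) := by simp only [Matrix.mul_assoc]
      _ = B * A := by rw [c1]
  calc C = C * A * C := c2.symm
    _ = B * (A * C) := by rw [e2, Matrix.mul_assoc]
    _ = B * A * B := by rw [e1, Matrix.mul_assoc]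
    _ = B := h2

lemma pinv_conj_diag {n : ℕ} (U : Matrix (Fin n) (Fin n) ℝ) (d : Fin n → ℝ) (hU : U * Uᵀ = 1) :
    pinv (U * diagonal d * Uᵀ) = U * diagonal (fun j => (d j)⁻¹) * Uᵀ := by
  have hU' : Uᵀ * U = 1 := mul_eq_one_comm.mp hU
  have hm : ∀ a b : Fin n → ℝ, (U * diagonal a * Uᵀ) * (U * diagonal b * Uᵀ)
      = U * diagonal (fun j => a j * b j) * Uᵀ := by
    intro a b
    calc (U * diagonal a * Uᵀ) * (U * diagonal b * Uᵀ)
        = U * diagonal a * (Uᵀ * U) * diagonal b * Uᵀ := by simp only [Matrix.mul_assoc]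
      _ = U * (diagonal a * diagonal b) * Uᵀ := by rw [hU']; simp only [Matrix.mul_one, Matrix.mul_assoc]
      _ = _ := by rw [Matrix.diagonal_mul_diagonal]
  have ht : ∀ a : Fin n → ℝ, (U * diagonal a * Uᵀ)ᵀ = U * diagonal a * Uᵀ := by
    intro a
    simp [Matrix.mul_assoc]
  apply pinv_unique
  · rw [hm, hm]
    congr; funext j
    by_cases h : d j = 0 <;> simp [h]
  · rw [hm, hm]
    congr; funext j
    by_cases h : d j = 0 <;> simp [h]
  · rw [hm, ht]
  · rw [hm, ht]

/-- Rearrangement inequality for doubly stochastic matrices. -/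
lemma ds_rearr {n : ℕ} (T : Matrix (Fin n) (Fin n) ℝ) (a a' b : Fin n → ℝ)
    (σ : Equiv.Perm (Fin n)) (hT0 : ∀ i j, 0 ≤ T i j) (hr : ∀ i, ∑ j, T i j = 1)
    (hc : ∀ j, ∑ i, T i j = 1) (ha : Antitone a) (hb : Antitone b)
    (haa : ∀ i, a i = a' (σ i)) :
    ∑ i, ∑ j, a' i * T i j * b j ≤ ∑ j, a j * b j := by
  have hmem : T ∈ doublyStochastic ℝ (Fin n) := by
    rw [mem_doublyStochastic_iff_sum]
    exact ⟨hT0, hr, hc⟩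
  obtain ⟨c, hc0, hc1, hcT⟩ := exists_eq_sum_perm_of_mem_doublyStochastic hmem
  have hmono : Monovary a b := ha.monovary hb
  have hperm : ∀ τ : Equiv.Perm (Fin n),
      ∑ i, ∑ j, a' i * (τ.permMatrix ℝ i j) * b j ≤ ∑ j, a j * b j := by
    intro τ
    have h1 : ∑ i, ∑ j, a' i * (τ.permMatrix ℝ i j) * b j = ∑ i, a' i * b (τ i) := by
      refine Finset.sum_congr rfl fun i _ => ?_
      rw [Finset.sum_eq_single (τ i)]
      · simp [Equiv.Perm.permMatrix, PEquiv.toMatrix_apply]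
      · intro j _ hj
        simp [Equiv.Perm.permMatrix, PEquiv.toMatrix_apply, Ne.symm hj]
      · simp
    rw [h1]
    have h2 : ∑ i, a' i * b (τ i) = ∑ j, a ((τ.symm.trans σ.symm) j) * b j := by
      conv_rhs => rw [← Equiv.sum_comp τ]
      refine Finset.sum_congr rfl fun i _ => ?_
      rw [haa]
      simp
    rw [h2]
    exact hmono.sum_comp_perm_mul_le_sum_mul
  have hexp : ∑ i, ∑ j, a' i * T i j * b j
      = ∑ τ : Equiv.Perm (Fin n), c τ * ∑ i, ∑ j, a' i * (τ.permMatrix ℝ i j) * b j := by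
    rw [← hcT]
    simp only [Matrix.sum_apply, Matrix.smul_apply, smul_eq_mul, Finset.mul_sum, Finset.sum_mul]
    conv_rhs => rw [Finset.sum_comm]
    refine Finset.sum_congr rfl fun i _ => ?_
    conv_rhs => rw [Finset.sum_comm]
    refine Finset.sum_congr rfl fun j _ => ?_
    refine Finset.sum_congr rfl fun τ _ => ?_
    ring
  rw [hexp]
  calc _ ≤ ∑ τ : Equiv.Perm (Fin n), c τ * ∑ j, a j * b j :=
        Finset.sum_le_sum fun τ _ => mul_le_mul_of_nonneg_left (hperm τ) (hc0 τ)
    _ = _ := by rw [← Finset.sum_mul, hc1, one_mul]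

/-! ## Limits along a filter -/

lemma orth_row {n : ℕ} {P : Matrix (Fin n) (Fin n) ℝ} (h : P * Pᵀ = 1) (i : Fin n) :
    ∑ j, P i j ^ 2 = 1 := by
  have := congrFun (congrFun h i) i
  simpa [Matrix.mul_apply, sq] using this

lemma orth_col {n : ℕ} {P : Matrix (Fin n) (Fin n) ℝ} (h : P * Pᵀ = 1) (j : Fin n) :
    ∑ i, P i j ^ 2 = 1 := by
  have h' : Pᵀ * P = 1 := mul_eq_one_comm.mp h
  have := congrFun (congrFun h' j) j
  simpa [Matrix.mul_apply, sq] using this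

/-- Data of a converging family of spectral decompositions of `Diag μ + t G`. -/
structure Fam {n : ℕ} {ι : Type*} (F : Filter ι) (t : ι → ℝ)
    (G P : ι → Matrix (Fin n) (Fin n) ℝ) (lam : ι → Fin n → ℝ) (μ : Fin n → ℝ)
    (Gb Pb : Matrix (Fin n) (Fin n) ℝ) : Prop where
  ht0 : Tendsto t F (𝓝 0)
  htp : ∀ᶠ x in F, 0 < t x
  hG : Tendsto G F (𝓝 Gb)
  hP : Tendsto P F (𝓝 Pb)
  hlam : ∀ j, Tendsto (fun x => lam x j) F (𝓝 (μ j))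
  hPo : ∀ x, P x * (P x)ᵀ = 1
  heq : ∀ x, (diagonal μ + t x • G x) * P x = P x * diagonal (lam x)
  hanti : ∀ x, Antitone (lam x)

namespace Fam

variable {n : ℕ} {ι : Type*} {F : Filter ι} {t : ι → ℝ}
    {G P : ι → Matrix (Fin n) (Fin n) ℝ} {lam : ι → Fin n → ℝ} {μ : Fin n → ℝ}
    {Gb Pb : Matrix (Fin n) (Fin n) ℝ}

lemma entry (h : Fam F t G P lam μ Gb Pb) (x : ι) (i j : Fin n) :
    (lam x j - μ i) * P x i j = t x * (G x * P x) i j := by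
  have := congrFun (congrFun (h.heq x) i) j
  rw [Matrix.add_mul, Matrix.smul_mul, Matrix.add_apply, Matrix.diagonal_mul,
    Matrix.mul_diagonal, Matrix.smul_apply, smul_eq_mul] at this
  linarith

lemma tP (h : Fam F t G P lam μ Gb Pb) (i j : Fin n) :
    Tendsto (fun x => P x i j) F (𝓝 (Pb i j)) :=
  (tendsto_pi_nhds.mp ((tendsto_pi_nhds.mp h.hP) i)) j

lemma tGP (h : Fam F t G P lam μ Gb Pb) (i j : Fin n) :
    Tendsto (fun x => (G x * P x) i j) F (𝓝 ((Gb * Pb) i j)) := by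
  have : Continuous fun p : Matrix (Fin n) (Fin n) ℝ × Matrix (Fin n) (Fin n) ℝ => p.1 * p.2 := by
    fun_prop
  have h2 := (this.tendsto (Gb, Pb)).comp (h.hG.prodMk_nhds h.hP)
  exact (tendsto_pi_nhds.mp ((tendsto_pi_nhds.mp h2) i)) j

lemma orthLim [F.NeBot] (h : Fam F t G P lam μ Gb Pb) : Pb * Pbᵀ = 1 := by
  have hc : Continuous fun p : Matrix (Fin n) (Fin n) ℝ => p * pᵀ := by fun_prop
  have h2 := (hc.tendsto Pb).comp h.hP
  have h3 : ((fun p : Matrix (Fin n) (Fin n) ℝ => p * pᵀ) ∘ P) = fun _ => 1 := by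
    funext x; exact h.hPo x
  rw [h3] at h2
  exact tendsto_nhds_unique h2 tendsto_const_nhds |>.symm ▸ rfl

lemma offq (h : Fam F t G P lam μ Gb Pb) (i j : Fin n) (hij : μ i ≠ μ j) :
    Tendsto (fun x => P x i j / t x) F (𝓝 ((Gb * Pb) i j * (μ j - μ i)⁻¹)) := by
  have hne : μ j - μ i ≠ 0 := sub_ne_zero.mpr (Ne.symm hij)
  have hl : Tendsto (fun x => lam x j - μ i) F (𝓝 (μ j - μ i)) := (h.hlam j).sub_const _
  have := (h.tGP i j).mul (hl.inv₀ hne)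
  refine this.congr' ?_
  filter_upwards [h.htp, hl.eventually_ne hne] with x hx hx2
  have := h.entry x i j
  field_simp
  linarith

lemma offzero [F.NeBot] (h : Fam F t G P lam μ Gb Pb) (i j : Fin n) (hij : μ i ≠ μ j) :
    Pb i j = 0 := by
  have h1 := (h.offq i j hij).mul h.ht0
  rw [mul_zero] at h1
  refine tendsto_nhds_unique (h.tP i j) (h1.congr' ?_)
  filter_upwards [h.htp] with x hx
  field_simp

/-- limit of the first order quotient -/
def wb (Gb Pb : Matrix (Fin n) (Fin n) ℝ) (j : Fin n) : ℝ := ∑ i, Pb i j * (Gb * Pb) i j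

lemma tw [F.NeBot] (h : Fam F t G P lam μ Gb Pb) (j : Fin n) :
    Tendsto (fun x => (lam x j - μ j) / t x) F (𝓝 (wb Gb Pb j)) := by
  have hs : Tendsto (fun x => ∑ i, if μ i = μ j then P x i j ^ 2 else 0) F (𝓝 1) := by
    have h1 : (1 : ℝ) = ∑ i, if μ i = μ j then Pb i j ^ 2 else 0 := by
      rw [← orth_col h.orthLim j]
      refine Finset.sum_congr rfl fun i _ => ?_
      split_ifs with hi
      · rfl
      · rw [h.offzero i j hi]; simp
    rw [h1]
    refine tendsto_finsetSum _ fun i _ => ?_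
    split_ifs
    · exact (h.tP i j).pow 2
    · exact tendsto_const_nhds
  have hn : Tendsto (fun x => ∑ i, if μ i = μ j then P x i j * (G x * P x) i j else 0) F
      (𝓝 (wb Gb Pb j)) := by
    have h1 : wb Gb Pb j = ∑ i, if μ i = μ j then Pb i j * (Gb * Pb) i j else 0 := by
      refine Finset.sum_congr rfl fun i _ => ?_
      split_ifs with hi
      · rfl
      · rw [h.offzero i j hi]; simp
    rw [h1]
    refine tendsto_finsetSum _ fun i _ => ?_
    split_ifs
    · exact (h.tP i j).mul (h.tGP i j)
    · exact tendsto_const_nhds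
  have := hn.div hs one_ne_zero
  rw [div_one] at this
  refine this.congr' ?_
  filter_upwards [h.htp, hs.eventually_ne one_ne_zero] with x hx hx2
  simp only [Pi.div_apply]
  rw [div_eq_div_iff hx2 hx.ne', Finset.sum_mul, Finset.mul_sum]
  refine Finset.sum_congr rfl fun i _ => ?_
  split_ifs with hi
  · have := h.entry x i j
    rw [hi] at this
    linear_combination (-(P x i j)) * this
  · simp

lemma wb_eq [F.NeBot] (h : Fam F t G P lam μ Gb Pb) (i j : Fin n) (hij : μ i = μ j) :
    wb Gb Pb j * Pb i j = (Gb * Pb) i j := by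
  refine tendsto_nhds_unique ((h.tw j).mul (h.tP i j)) ((h.tGP i j).congr' ?_)
  filter_upwards [h.htp] with x hx
  have := h.entry x i j
  rw [hij] at this
  field_simp
  linarith

lemma w_anti (h : Fam F t G P lam μ Gb Pb) (i j : Fin n) (hij : i ≤ j) (hm : μ i = μ j)
    (x : ι) (hx : 0 < t x) : (lam x j - μ j) / t x ≤ (lam x i - μ i) / t x := by
  rw [hm]
  gcongr
  exact h.hanti x hij

lemma wb_anti [F.NeBot] (h : Fam F t G P lam μ Gb Pb) (i j : Fin n) (hij : i ≤ j)
    (hm : μ i = μ j) : wb Gb Pb j ≤ wb Gb Pb i := by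
  refine le_of_tendsto_of_tendsto (h.tw j) (h.tw i) ?_
  filter_upwards [h.htp] with x hx
  exact h.w_anti i j hij hm x hx

lemma diagG (h : Fam F t G P lam μ Gb Pb) (x : ι) (hx : 0 < t x) (i : Fin n) :
    G x i i = ∑ j, P x i j ^ 2 * ((lam x j - μ j) / t x)
      + t x * ∑ j, (if μ i = μ j then 0 else P x i j / t x) ^ 2 * (μ j - μ i) := by
  have h1 : t x * G x i i = ∑ j, P x i j ^ 2 * (lam x j - μ i) := by
    have e1 : diagonal μ + t x • G x = P x * diagonal (lam x) * (P x)ᵀ := by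
      rw [← h.heq x, Matrix.mul_assoc, h.hPo x, Matrix.mul_one]
    have e2 := congrFun (congrFun e1 i) i
    rw [Matrix.mul_apply] at e2
    simp only [Matrix.add_apply, Matrix.diagonal_apply_eq, Matrix.smul_apply, smul_eq_mul,
      Matrix.mul_diagonal, Matrix.transpose_apply] at e2
    have e3 := orth_row (h.hPo x) i
    simp only [mul_sub, Finset.sum_sub_distrib]
    rw [← Finset.sum_mul, e3]
    have : ∑ j, P x i j ^ 2 * lam x j = ∑ j, P x i j * lam x j * P x i j :=
      Finset.sum_congr rfl fun j _ => by ring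
    rw [this, ← e2]; ring
  have h2 : G x i i = (∑ j, P x i j ^ 2 * (lam x j - μ i)) / t x := by
    rw [← h1]; field_simp
  rw [h2, Finset.sum_div, Finset.mul_sum, ← Finset.sum_add_distrib]
  refine Finset.sum_congr rfl fun j _ => ?_
  split_ifs with hij
  · rw [hij]; field_simp; ring
  · field_simp; ring

lemma tq (h : Fam F t G P lam μ Gb Pb) (i j : Fin n) :
    Tendsto (fun x => if μ i = μ j then 0 else P x i j / t x) F
      (𝓝 ((Gb * Pb) i j * (μ j - μ i)⁻¹)) := by
  split_ifs with hij
  · simpa [hij] using tendsto_const_nhds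
  · exact h.offq i j hij

lemma curv_eq [F.NeBot] (h : Fam F t G P lam μ Gb Pb) (i : Fin n) :
    ∑ j, ((Gb * Pb) i j * (μ j - μ i)⁻¹) ^ 2 * (μ j - μ i)
      = ∑ j, Gb i j ^ 2 * (μ j - μ i)⁻¹ := by
  set D : Matrix (Fin n) (Fin n) ℝ := diagonal fun j => (μ j - μ i)⁻¹ with hD
  have hcomm : Pb * D = D * Pb := by
    ext k j
    rw [hD, Matrix.mul_diagonal, Matrix.diagonal_mul]
    by_cases hkj : μ k = μ j
    · rw [hkj, mul_comm]
    · rw [h.offzero k j hkj]; simp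
  have e : (Gb * Pb) * D * (Gb * Pb)ᵀ = Gb * D * Gbᵀ := by
    calc (Gb * Pb) * D * (Gb * Pb)ᵀ = Gb * (Pb * D) * (Pbᵀ * Gbᵀ) := by
          rw [Matrix.transpose_mul]; simp only [Matrix.mul_assoc]
      _ = Gb * D * (Pb * Pbᵀ) * Gbᵀ := by rw [hcomm]; simp only [Matrix.mul_assoc]
      _ = _ := by rw [h.orthLim, Matrix.mul_one]
  have e2 := congrFun (congrFun e i) i
  rw [Matrix.mul_apply, Matrix.mul_apply] at e2
  simp only [hD, Matrix.mul_diagonal, Matrix.transpose_apply] at e2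
  have e3 : ∑ j, Gb i j ^ 2 * (μ j - μ i)⁻¹ = ∑ j, Gb i j * (μ j - μ i)⁻¹ * Gb i j :=
    Finset.sum_congr rfl fun j _ => by ring
  rw [e3, ← e2]
  refine Finset.sum_congr rfl fun j _ => ?_
  by_cases hj : μ j - μ i = 0
  · simp [hj]
  · field_simp

lemma exists_shift (μ w : Fin n → ℝ) :
    ∃ N : ℝ, ∀ i j, μ j < μ i → 0 < (w i + N * μ i) - (w j + N * μ j) := by
  have : ∀ᶠ N : ℝ in atTop, ∀ i j, μ j < μ i → 0 < (w i + N * μ i) - (w j + N * μ j) := by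
    rw [eventually_all]; intro i
    rw [eventually_all]; intro j
    by_cases hij : μ j < μ i
    · have h1 : Tendsto (fun N : ℝ => (w i - w j) + N * (μ i - μ j)) atTop atTop :=
        tendsto_atTop_add_const_left _ _ (tendsto_id.atTop_mul_const (sub_pos.mpr hij))
      filter_upwards [h1.eventually_gt_atTop 0] with N hN _
      linarith
    · simp [hij]
  exact this.exists

lemma main_ineq [F.NeBot] (h : Fam F t G P lam μ Gb Pb) (hμ : Antitone μ) (y v : Fin n → ℝ)
    (σ : Equiv.Perm (Fin n)) (hσ : ∀ i, μ (σ i) = μ i) (hv : ∀ i, v i = y (σ i))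
    (hvdec : ∀ i j : Fin n, i ≤ j → μ i = μ j → v j ≤ v i) :
    ∃ r : ι → ℝ, Tendsto r F (𝓝 (2 * ∑ i, y i * ∑ j, Gb i j ^ 2 * (μ i - μ j)⁻¹)) ∧
      ∀ᶠ x in F, r x ≤ 2 / t x * (∑ j, v j * ((lam x j - μ j) / t x) - ∑ i, y i * G x i i) := by
  obtain ⟨N, hN⟩ := exists_shift μ (wb Gb Pb)
  obtain ⟨M, hM⟩ := exists_shift μ v
  set q : ι → Fin n → Fin n → ℝ := fun x i j => if μ i = μ j then 0 else P x i j / t x with hq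
  set w : ι → Fin n → ℝ := fun x j => (lam x j - μ j) / t x with hw
  refine ⟨fun x => - 2 * t x * (∑ i, ∑ j, q x i j ^ 2 * (μ j - μ i)
        * (M * w x j - N * y i + M * N * μ j))
      - 2 * ∑ i, y i * ∑ j, q x i j ^ 2 * (μ j - μ i), ?_, ?_⟩
  · have hl1 : Tendsto (fun x => ∑ i, ∑ j, q x i j ^ 2 * (μ j - μ i)
        * (M * w x j - N * y i + M * N * μ j)) F
        (𝓝 (∑ i, ∑ j, ((Gb * Pb) i j * (μ j - μ i)⁻¹) ^ 2 * (μ j - μ i)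
        * (M * wb Gb Pb j - N * y i + M * N * μ j))) :=
      tendsto_finsetSum _ fun i _ => tendsto_finsetSum _ fun j _ =>
        (((h.tq i j).pow 2).mul_const _).mul
          ((((h.tw j).const_mul M).sub_const _).add_const _)
    have hl2 : Tendsto (fun x => ∑ i, y i * ∑ j, q x i j ^ 2 * (μ j - μ i)) F
        (𝓝 (∑ i, y i * ∑ j, ((Gb * Pb) i j * (μ j - μ i)⁻¹) ^ 2 * (μ j - μ i))) :=
      tendsto_finsetSum _ fun i _ => (tendsto_finsetSum _ fun j _ =>
        (((h.tq i j).pow 2).mul_const _)).const_mul _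
    have := ((h.ht0.const_mul (-2)).mul hl1).sub (hl2.const_mul 2)
    convert this using 2
    simp only [mul_zero, zero_mul, zero_sub, ← mul_neg]
    congr 1
    rw [← Finset.sum_neg_distrib]
    refine Finset.sum_congr rfl fun i _ => ?_
    rw [h.curv_eq i, ← mul_neg, ← Finset.sum_neg_distrib]
    congr 1
    refine Finset.sum_congr rfl fun j _ => ?_
    rw [← mul_neg, ← inv_neg, neg_sub]
  · have hev : ∀ᶠ x in F, ∀ i j, μ j < μ i → 0 < (w x i + N * μ i) - (w x j + N * μ j) := by
      rw [eventually_all]; intro i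
      rw [eventually_all]; intro j
      by_cases hij : μ j < μ i
      · have h1 : Tendsto (fun x => (w x i + N * μ i) - (w x j + N * μ j)) F
          (𝓝 ((wb Gb Pb i + N * μ i) - (wb Gb Pb j + N * μ j))) :=
          ((h.tw i).add_const _).sub ((h.tw j).add_const _)
        filter_upwards [h1.eventually (lt_mem_nhds (hN i j hij))] with x hx _
        exact hx
      · simp [hij]
    filter_upwards [hev, h.htp] with x hx hxt
    have hds := ds_rearr (fun i j => P x i j ^ 2) (fun i => v i + M * μ i)
      (fun i => y i + M * μ i) (fun i => w x i + N * μ i) σ (fun i j => sq_nonneg _)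
      (orth_row (h.hPo x)) (orth_col (h.hPo x))
      (by
        intro i j hij
        rcases (hμ hij).lt_or_eq with hlt | he
        · have := hM i j hlt
          simp only; linarith
        · have := hvdec i j hij he.symm
          simp only [he]; linarith)
      (by
        intro i j hij
        rcases (hμ hij).lt_or_eq with hlt | he
        · have := hx i j hlt
          simp only; linarith
        · have := h.w_anti i j hij he.symm x hxt
          simp only [he, hw] at this ⊢; linarith)
      (by intro i; simp only [hv, hσ])
    have hT : ∀ i j, P x i j ^ 2 * (μ j - μ i) = t x ^ 2 * (q x i j ^ 2 * (μ j - μ i)) := by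
      intro i j
      simp only [hq]
      split_ifs with hij
      · simp [hij]
      · field_simp
    have hcol : ∀ f : Fin n → ℝ, ∑ j, f j = ∑ i, ∑ j, P x i j ^ 2 * f j := by
      intro f
      rw [Finset.sum_comm]
      refine Finset.sum_congr rfl fun j _ => ?_
      rw [← Finset.sum_mul, orth_col (h.hPo x), one_mul]
    have hrow : ∀ f : Fin n → ℝ, ∑ i, f i = ∑ i, ∑ j, P x i j ^ 2 * f i := by
      intro f
      refine Finset.sum_congr rfl fun i _ => ?_
      rw [← Finset.sum_mul, orth_row (h.hPo x), one_mul]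
    have hvy : ∑ j, v j * μ j = ∑ i, y i * μ i := by
      conv_rhs => rw [← Equiv.sum_comp σ]
      refine Finset.sum_congr rfl fun i _ => ?_
      rw [hv, hσ]
    have hA : ∑ j, (v j + M * μ j) * (w x j + N * μ j)
        = ∑ j, v j * w x j + ∑ i, ∑ j, P x i j ^ 2 * (M * μ j * w x j)
          + ∑ i, ∑ j, P x i j ^ 2 * (N * (y i * μ i))
          + ∑ i, ∑ j, P x i j ^ 2 * (M * N * μ j ^ 2) := by
      rw [← hcol (fun j => M * μ j * w x j), ← hrow (fun i => N * (y i * μ i)),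
        ← hcol (fun j => M * N * μ j ^ 2), ← Finset.mul_sum, ← hvy, Finset.mul_sum,
        ← Finset.sum_add_distrib, ← Finset.sum_add_distrib, ← Finset.sum_add_distrib]
      exact Finset.sum_congr rfl fun j _ => by ring
    have hB : ∑ i, y i * G x i i = ∑ i, ∑ j, y i * P x i j ^ 2 * w x j
        + t x * ∑ i, y i * ∑ j, q x i j ^ 2 * (μ j - μ i) := by
      rw [Finset.mul_sum, ← Finset.sum_add_distrib]
      refine Finset.sum_congr rfl fun i _ => ?_
      rw [h.diagG x hxt i, mul_add, Finset.mul_sum]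
      simp only [hw, hq]
      congr 1
      · exact Finset.sum_congr rfl fun j _ => by ring
      · ring
    have hC : ∑ i, ∑ j, (y i + M * μ i) * P x i j ^ 2 * (w x j + N * μ j)
        = ∑ i, ∑ j, y i * P x i j ^ 2 * w x j + ∑ i, ∑ j, P x i j ^ 2 * (M * μ j * w x j)
          + ∑ i, ∑ j, P x i j ^ 2 * (N * (y i * μ i))
          + ∑ i, ∑ j, P x i j ^ 2 * (M * N * μ j ^ 2)
          - t x ^ 2 * ∑ i, ∑ j, q x i j ^ 2 * (μ j - μ i)
            * (M * w x j - N * y i + M * N * μ j) := by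
      rw [Finset.mul_sum, ← Finset.sum_add_distrib, ← Finset.sum_add_distrib,
        ← Finset.sum_add_distrib, ← Finset.sum_sub_distrib]
      refine Finset.sum_congr rfl fun i _ => ?_
      rw [Finset.mul_sum, ← Finset.sum_add_distrib, ← Finset.sum_add_distrib,
        ← Finset.sum_add_distrib, ← Finset.sum_sub_distrib]
      refine Finset.sum_congr rfl fun j _ => ?_
      have := hT i j
      linear_combination (-(M * w x j - N * y i + M * N * μ j)) * this
    rw [hA, hC] at hds
    rw [hB]
    set S := ∑ i, ∑ j, q x i j ^ 2 * (μ j - μ i) * (M * w x j - N * y i + M * N * μ j)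
    set R := ∑ i, y i * ∑ j, q x i j ^ 2 * (μ j - μ i)
    have hfin : - (t x ^ 2 * S) - t x * R
        ≤ ∑ j, v j * w x j - (∑ i, ∑ j, y i * P x i j ^ 2 * w x j + t x * R) := by
      linarith
    have hpos : 0 < 2 / t x := by positivity
    have := mul_le_mul_of_nonneg_left hfin hpos.le
    refine le_trans (le_of_eq ?_) this
    field_simp

end Fam

/-! ## Blocks, curvature, and the final assembly -/

lemma sum_block {n : ℕ} (X : Matrix (Fin n) (Fin n) ℝ) (i : Fin n) (f : Fin n → ℝ)
    (hf : ∀ j, eigval X j ≠ eigval X i → f j = 0) :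
    ∑ a, f (blockEmb X i a) = ∑ j, f j := by
  have h1 : ∑ a, f (blockEmb X i a) = ∑ j : blockSet X i, f j :=
    Equiv.sum_comp ((blockSet X i).orderIsoOfFin rfl).toEquiv (fun j : blockSet X i => f j)
  rw [h1, Finset.sum_coe_sort (blockSet X i) f]
  refine Finset.sum_subset (Finset.subset_univ _) fun j _ hj => hf j ?_
  simpa [blockSet] using hj

lemma blockEmb_mem {n : ℕ} (X : Matrix (Fin n) (Fin n) ℝ) (i : Fin n)
    (a : Fin (blockSet X i).card) : eigval X (blockEmb X i a) = eigval X i := by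
  have h : blockEmb X i a ∈ blockSet X i := ((blockSet X i).orderIsoOfFin rfl a).2
  unfold blockSet at h
  exact (Finset.mem_filter.mp h).2

lemma blockEmb_strictMono {n : ℕ} (X : Matrix (Fin n) (Fin n) ℝ) (i : Fin n) :
    StrictMono (blockEmb X i) := by
  intro a b hab
  exact ((blockSet X i).orderIsoOfFin rfl).strictMono hab

lemma blockEmb_blockIdx {n : ℕ} (X : Matrix (Fin n) (Fin n) ℝ) (i : Fin n) :
    blockEmb X i (blockIdx X i) = i := by
  simp [blockEmb, blockIdx]

lemma lambdaDir_eq {n : ℕ} (X U H Pb : Matrix (Fin n) (Fin n) ℝ) (w : Fin n → ℝ)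
    (ho : Pb * Pbᵀ = 1) (hoff : ∀ i j, eigval X i ≠ eigval X j → Pb i j = 0)
    (hw : ∀ i j, eigval X i = eigval X j → w j * Pb i j = ((Uᵀ * H * U) * Pb) i j)
    (hanti : ∀ i j, i ≤ j → eigval X i = eigval X j → w j ≤ w i) :
    lambdaDir X U H = w := by
  funext i
  have hB : blockMat X Pb i * (blockMat X Pb i)ᵀ = 1 := by
    ext a b
    rw [Matrix.mul_apply]
    simp only [Matrix.transpose_apply, blockMat, Matrix.of_apply]
    rw [sum_block X i (fun j => Pb (blockEmb X i a) j * Pb (blockEmb X i b) j)]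
    · have := congrFun (congrFun ho (blockEmb X i a)) (blockEmb X i b)
      rw [Matrix.mul_apply] at this
      simp only [Matrix.transpose_apply] at this
      rw [this, Matrix.one_apply, Matrix.one_apply]
      simp [(blockEmb_strictMono X i).injective.eq_iff]
    · intro j hj
      rw [hoff _ _ (by rw [blockEmb_mem]; exact Ne.symm hj), zero_mul]
  have hG : blockMat X (Uᵀ * H * U) i * blockMat X Pb i
      = blockMat X Pb i * diagonal (w ∘ blockEmb X i) := by
    ext a b
    rw [Matrix.mul_apply, Matrix.mul_diagonal]
    simp only [blockMat, Matrix.of_apply]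
    rw [sum_block X i (fun j => (Uᵀ * H * U) (blockEmb X i a) j * Pb j (blockEmb X i b))]
    · rw [← Matrix.mul_apply, ← hw _ _ (by rw [blockEmb_mem, blockEmb_mem])]
      simp [mul_comm]
    · intro j hj
      rw [hoff _ _ (by rw [blockEmb_mem]; exact hj), mul_zero]
  have hE : eigval (blockMat X (Uᵀ * H * U) i) = w ∘ blockEmb X i := by
    refine eigval_unique _ (blockMat X Pb i) _ hB ?_ ?_
    · rw [← hG, Matrix.mul_assoc (blockMat X (Uᵀ * H * U) i), hB, Matrix.mul_one]
    · intro a b hab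
      exact hanti _ _ ((blockEmb_strictMono X i).monotone hab)
        (by rw [blockEmb_mem, blockEmb_mem])
  unfold lambdaDir
  rw [hE, Function.comp_apply, blockEmb_blockIdx]

lemma curvTerm_eq {n : ℕ} (X U H : Matrix (Fin n) (Fin n) ℝ) (y : Fin n → ℝ)
    (hU : U ∈ eigOrth X) (hH : Hᵀ = H) :
    curvTerm X U H y
      = 2 * ∑ i, y i * ∑ j, (Uᵀ * H * U) i j ^ 2 * (eigval X i - eigval X j)⁻¹ := by
  obtain ⟨hU1, hX⟩ := hU
  unfold curvTerm
  congr 1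
  refine Finset.sum_congr rfl fun i _ => ?_
  congr 1
  have e1 : eigval X i • (1 : Matrix (Fin n) (Fin n) ℝ) - X
      = U * diagonal (fun j => eigval X i - eigval X j) * Uᵀ := by
    have : diagonal (fun j => eigval X i - eigval X j)
        = eigval X i • (1 : Matrix (Fin n) (Fin n) ℝ) - diagonal (eigval X) := by
      rw [← Matrix.diagonal_one, ← Matrix.diagonal_smul, Matrix.diagonal_sub]
      congr 1
      funext j
      simp
    rw [this, Matrix.mul_sub, Matrix.sub_mul, ← hX, Matrix.mul_smul, Matrix.smul_mul,
      Matrix.mul_one, hU1]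
  rw [e1, pinv_conj_diag _ _ hU1]
  have e2 : Uᵀ * (H * (U * diagonal (fun j => (eigval X i - eigval X j)⁻¹) * Uᵀ) * H) * U
      = (Uᵀ * H * U) * diagonal (fun j => (eigval X i - eigval X j)⁻¹) * (Uᵀ * H * U) := by
    simp only [Matrix.mul_assoc]
  have hs : (Uᵀ * H * U)ᵀ = Uᵀ * H * U := by
    simp [Matrix.mul_assoc, hH]
  rw [e2, Matrix.mul_apply]
  refine Finset.sum_congr rfl fun j _ => ?_
  rw [Matrix.mul_diagonal]
  have : (Uᵀ * H * U) j i = (Uᵀ * H * U) i j := by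
    conv_lhs => rw [← hs]
    rfl
  rw [this]; ring

lemma sym_isHermitian {n : ℕ} (A : Sym n) : A.val.IsHermitian := by
  have : A.valᵀ = A.val := A.2
  unfold Matrix.IsHermitian
  rw [Matrix.conjTranspose_eq_transpose_of_trivial, this]

lemma orth_abs_le {n : ℕ} {P : Matrix (Fin n) (Fin n) ℝ} (h : P * Pᵀ = 1) (i j : Fin n) :
    P i j ∈ Set.Icc (-1 : ℝ) 1 := by
  have h1 : P i j ^ 2 ≤ 1 := by
    rw [← orth_row h i]
    exact Finset.single_le_sum (f := fun j => P i j ^ 2) (fun _ _ => sq_nonneg _)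
      (Finset.mem_univ j)
  exact abs_le.mp ((sq_le_one_iff_abs_le_one _).mp h1)

lemma fam_exists {n : ℕ} (X H : Sym n) (U : Matrix (Fin n) (Fin n) ℝ) (hU : U ∈ eigOrth X.val)
    (F : Ultrafilter (ℝ × Sym n)) (hF : (F : Filter (ℝ × Sym n)) ≤ 𝓝[>] (0 : ℝ) ×ˢ 𝓝 H) :
    ∃ (P : ℝ × Sym n → Matrix (Fin n) (Fin n) ℝ) (Pb : Matrix (Fin n) (Fin n) ℝ),
      Fam (F : Filter (ℝ × Sym n)) (fun x => x.1) (fun x => Uᵀ * x.2.val * U) P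
        (fun x => eigval (X + x.1 • x.2).val) (eigval X.val) (Uᵀ * H.val * U) Pb := by
  obtain ⟨hU1, hX⟩ := hU
  have hU2 : Uᵀ * U = 1 := mul_eq_one_comm.mp hU1
  choose Q hQ1 hQ2 using fun x : ℝ × Sym n =>
    exists_spectral (X + x.1 • x.2).val (sym_isHermitian _)
  have hQ1' : ∀ x, (Q x)ᵀ * Q x = 1 := fun x => mul_eq_one_comm.mp (hQ1 x)
  have hPo : ∀ x, (Uᵀ * Q x) * (Uᵀ * Q x)ᵀ = 1 := by
    intro x
    rw [Matrix.transpose_mul, Matrix.transpose_transpose]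
    calc Uᵀ * Q x * ((Q x)ᵀ * U) = Uᵀ * (Q x * (Q x)ᵀ) * U := by simp only [Matrix.mul_assoc]
      _ = 1 := by rw [hQ1, Matrix.mul_one, hU2]
  have ht : Tendsto (fun x : ℝ × Sym n => x.1) F (𝓝[>] 0) := tendsto_fst.mono_left hF
  have ht0 : Tendsto (fun x : ℝ × Sym n => x.1) F (𝓝 0) := ht.mono_right nhdsWithin_le_nhds
  have hH' : Tendsto (fun x : ℝ × Sym n => x.2) F (𝓝 H) := tendsto_snd.mono_left hF
  have hH : Tendsto (fun x : ℝ × Sym n => x.2.val) F (𝓝 H.val) :=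
    (continuous_subtype_val.tendsto H).comp hH'
  -- compactness
  have hK : IsCompact (X := Matrix (Fin n) (Fin n) ℝ) (Set.pi Set.univ fun _ : Fin n =>
      Set.pi Set.univ fun _ : Fin n => Set.Icc (-1 : ℝ) 1) :=
    isCompact_univ_pi fun _ => isCompact_univ_pi fun _ => isCompact_Icc
  obtain ⟨Pb, _, hPb⟩ := hK.ultrafilter_le_nhds' (F.map fun x => Uᵀ * Q x) (by
    refine Ultrafilter.mem_map.mpr (Filter.univ_mem' (f := (F : Filter (ℝ × Sym n))) fun x => ?_)
    intro i _ j _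
    exact orth_abs_le (hPo x) i j)
  have hP : Tendsto (fun x => Uᵀ * Q x) (F : Filter (ℝ × Sym n)) (𝓝 Pb) := hPb
  have hQl : Tendsto Q (F : Filter (ℝ × Sym n)) (𝓝 (U * Pb)) := by
    have hc : Continuous fun A : Matrix (Fin n) (Fin n) ℝ => U * A := by fun_prop
    refine ((hc.tendsto Pb).comp hP).congr fun x => ?_
    simp only [Function.comp]
    rw [← Matrix.mul_assoc, hU1, Matrix.one_mul]
  set V := U * Pb with hV
  have hVo : V * Vᵀ = 1 := by
    have hc : Continuous fun A : Matrix (Fin n) (Fin n) ℝ => A * Aᵀ := by fun_prop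
    refine tendsto_nhds_unique (((hc.tendsto V).comp hQl)) ?_
    refine tendsto_const_nhds.congr fun x => ?_
    exact (hQ1 x).symm
  have hZ : Tendsto (fun x : ℝ × Sym n => (X + x.1 • x.2).val) F (𝓝 X.val) := by
    have : Tendsto (fun x : ℝ × Sym n => X.val + x.1 • x.2.val) F
        (𝓝 (X.val + (0 : ℝ) • H.val)) := tendsto_const_nhds.add (ht0.smul hH)
    rw [zero_smul, add_zero] at this
    exact this
  have hD : Tendsto (fun x : ℝ × Sym n => diagonal (eigval (X + x.1 • x.2).val))
      (F : Filter (ℝ × Sym n)) (𝓝 (Vᵀ * X.val * V)) := by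
    have hc : Continuous fun p : Matrix (Fin n) (Fin n) ℝ × Matrix (Fin n) (Fin n) ℝ =>
        p.1ᵀ * p.2 * p.1 := by fun_prop
    refine ((hc.tendsto (V, X.val)).comp (hQl.prodMk_nhds hZ)).congr fun x => ?_
    simp only [Function.comp]
    conv_lhs => rw [hQ2 x]
    calc (Q x)ᵀ * (Q x * diagonal (eigval (X + x.1 • x.2).val) * (Q x)ᵀ) * Q x
        = ((Q x)ᵀ * Q x) * diagonal (eigval (X + x.1 • x.2).val) * ((Q x)ᵀ * Q x) := by
          simp only [Matrix.mul_assoc]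
      _ = _ := by rw [hQ1', Matrix.one_mul, Matrix.mul_one]
  have hDe : ∀ i j, Tendsto (fun x : ℝ × Sym n => diagonal (eigval (X + x.1 • x.2).val) i j)
      (F : Filter (ℝ × Sym n)) (𝓝 ((Vᵀ * X.val * V) i j)) := fun i j =>
    (tendsto_pi_nhds.mp ((tendsto_pi_nhds.mp hD) i)) j
  set l : Fin n → ℝ := fun j => (Vᵀ * X.val * V) j j with hl
  have hlj : ∀ j, Tendsto (fun x : ℝ × Sym n => eigval (X + x.1 • x.2).val j)
      (F : Filter (ℝ × Sym n)) (𝓝 (l j)) := by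
    intro j
    simpa using hDe j j
  have hdl : Vᵀ * X.val * V = diagonal l := by
    ext i j
    by_cases hij : i = j
    · subst hij; simp [hl]
    · rw [Matrix.diagonal_apply_ne _ hij]
      refine tendsto_nhds_unique (hDe i j) ?_
      simp only [Matrix.diagonal_apply_ne _ hij]
      exact tendsto_const_nhds
  have hle : eigval X.val = l := by
    refine eigval_unique _ V l hVo ?_ ?_
    · rw [← hdl]
      calc X.val = (V * Vᵀ) * X.val * (V * Vᵀ) := by rw [hVo, Matrix.one_mul, Matrix.mul_one]
        _ = _ := by simp only [Matrix.mul_assoc]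
    · intro i j hij
      exact le_of_tendsto_of_tendsto' (hlj j) (hlj i) fun x => eigval_antitone _ hij
  refine ⟨fun x => Uᵀ * Q x, Pb, ⟨ht0, ?_, ?_, hP, ?_, hPo, ?_, fun x => eigval_antitone _⟩⟩
  · exact ht.eventually self_mem_nhdsWithin
  · have hc : Continuous fun A : Matrix (Fin n) (Fin n) ℝ => Uᵀ * A * U := by fun_prop
    exact (hc.tendsto _).comp hH
  · intro j
    rw [hle]
    exact hlj j
  · intro x
    have hXd : diagonal (eigval X.val) = Uᵀ * X.val * U := by
      conv_rhs => rw [hX]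
      calc diagonal (eigval X.val) = (Uᵀ * U) * diagonal (eigval X.val) * (Uᵀ * U) := by
            rw [hU2, Matrix.one_mul, Matrix.mul_one]
        _ = _ := by simp only [Matrix.mul_assoc]
    have e1 : diagonal (eigval X.val) + x.1 • (Uᵀ * x.2.val * U)
        = Uᵀ * (X + x.1 • x.2).val * U := by
      rw [hXd]
      simp [Matrix.mul_add, Matrix.add_mul]
    rw [e1]
    calc Uᵀ * (X + x.1 • x.2).val * U * (Uᵀ * Q x)
        = Uᵀ * (X + x.1 • x.2).val * (U * Uᵀ) * Q x := by simp only [Matrix.mul_assoc]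
      _ = Uᵀ * (X + x.1 • x.2).val * Q x := by rw [hU1, Matrix.mul_one]
      _ = Uᵀ * (Q x * diagonal (eigval (X + x.1 • x.2).val) * (Q x)ᵀ) * Q x := by
          conv_lhs => rw [hQ2 x]
      _ = Uᵀ * Q x * diagonal (eigval (X + x.1 • x.2).val) * ((Q x)ᵀ * Q x) := by
          simp only [Matrix.mul_assoc]
      _ = _ := by rw [hQ1', Matrix.mul_one]

lemma ereal_shift (A : EReal) (c r s : ℝ) (hc : 0 < c) :
    (c : EReal) * (A - (r : EReal)) = (c : EReal) * (A - (s : EReal)) + ((c * (s - r) : ℝ) : EReal) := by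
  induction A using EReal.rec with
  | bot => simp [EReal.coe_mul_bot_of_pos hc]
  | top =>
    rw [EReal.top_sub_coe, EReal.top_sub_coe, EReal.coe_mul_top_of_pos hc, EReal.top_add_coe]
  | coe a =>
    norm_cast
    ring

lemma ipM_eq {n : ℕ} (Y H : Sym n) (U : Matrix (Fin n) (Fin n) ℝ) (y : Fin n → ℝ)
    (hY : Y.val = U * Matrix.diagonal y * Uᵀ) :
    ipM Y H = ∑ i, y i * (Uᵀ * H.val * U) i i := by
  unfold ipM
  rw [hY, Matrix.mul_assoc, Matrix.mul_assoc, Matrix.trace_mul_comm, Matrix.mul_assoc,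
    Matrix.trace]
  refine Finset.sum_congr rfl fun i _ => ?_
  rw [Matrix.diag_apply, Matrix.diagonal_mul]

/-- The eigenvalue difference quotient. -/
def wq {n : ℕ} (X : Sym n) (p : ℝ × Sym n) : Fin n → ℝ :=
  fun j => (eigval (X + p.1 • p.2).val j - eigval X.val j) / p.1

lemma sdq2_split {n : ℕ} (θ : (Fin n → ℝ) → EReal) (X Y : Sym n)
    (U : Matrix (Fin n) (Fin n) ℝ) (y v : Fin n → ℝ)
    (hY : Y.val = U * Matrix.diagonal y * Uᵀ) (p : ℝ × Sym n) (hp : 0 < p.1) :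
    sdq2 ipM (specFn θ) X Y p.1 p.2 = sdq2 ipV θ (eigval X.val) v p.1 (wq X p)
      + ((2 / p.1 * (∑ j, v j * wq X p j - ∑ i, y i * (Uᵀ * p.2.val * U) i i) : ℝ) : EReal) := by
  have h1 : eigval X.val + p.1 • wq X p = eigval (X + p.1 • p.2).val := by
    funext j
    simp only [Pi.add_apply, Pi.smul_apply, smul_eq_mul, wq]
    field_simp
    ring
  unfold sdq2
  rw [h1, ereal_shift _ _ _ (p.1 * ipV v (wq X p)) (by positivity), ipM_eq Y p.2 U y hY]
  unfold specFn ipV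
  congr 2
  field_simp

lemma wq_tendsto {n : ℕ} (X H : Sym n) (U : Matrix (Fin n) (Fin n) ℝ) (hU : U ∈ eigOrth X.val) :
    Tendsto (fun p : ℝ × Sym n => (p.1, wq X p)) (𝓝[>] (0 : ℝ) ×ˢ 𝓝 H)
      (𝓝[>] (0 : ℝ) ×ˢ 𝓝 (lambdaDir X.val U H.val)) := by
  refine tendsto_fst.prodMk ?_
  rw [tendsto_iff_ultrafilter]
  intro F hF
  obtain ⟨P, Pb, hFam⟩ := fam_exists X H U hU F hF
  have he : lambdaDir X.val U H.val = Fam.wb (Uᵀ * H.val * U) Pb :=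
    lambdaDir_eq X.val U H.val Pb _ hFam.orthLim (fun i j hij => hFam.offzero i j hij)
      (fun i j hij => hFam.wb_eq i j hij) (fun i j h1 h2 => hFam.wb_anti i j h1 h2)
  rw [he]
  exact tendsto_pi_nhds.mpr fun j => hFam.tw j

lemma curv_liminf {n : ℕ} (X H : Sym n) (U : Matrix (Fin n) (Fin n) ℝ) (y v : Fin n → ℝ)
    (σ : Equiv.Perm (Fin n)) (hU : U ∈ eigOrth X.val)
    (hσblock : ∀ i, eigval X.val (σ i) = eigval X.val i)
    (hv : ∀ i, v i = y (σ i))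
    (hvdec : ∀ i j : Fin n, i ≤ j → eigval X.val i = eigval X.val j → v j ≤ v i) :
    ((curvTerm X.val U H.val y : ℝ) : EReal) ≤ liminf (fun p : ℝ × Sym n =>
      ((2 / p.1 * (∑ j, v j * wq X p j - ∑ i, y i * (Uᵀ * p.2.val * U) i i) : ℝ) : EReal))
      (𝓝[>] (0 : ℝ) ×ˢ 𝓝 H) := by
  refine EReal.ge_of_forall_gt_iff_ge.mp fun c hc => ?_
  have hc' : c < curvTerm X.val U H.val y := EReal.coe_lt_coe_iff.mp hc
  refine le_liminf_of_le (by isBoundedDefault) ?_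
  have hev : ∀ᶠ p : ℝ × Sym n in 𝓝[>] (0 : ℝ) ×ˢ 𝓝 H,
      c ≤ 2 / p.1 * (∑ j, v j * wq X p j - ∑ i, y i * (Uᵀ * p.2.val * U) i i) := by
    refine Filter.mem_iff_ultrafilter.mpr fun F hF => ?_
    obtain ⟨P, Pb, hFam⟩ := fam_exists X H U hU F hF
    obtain ⟨r, hr, hle⟩ := hFam.main_ineq (eigval_antitone _) y v σ hσblock hv hvdec
    rw [← curvTerm_eq X.val U H.val y hU H.2] at hr
    have hcr := hr.eventually (lt_mem_nhds hc')
    filter_upwards [hcr, hle] with x h1 h2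
    exact h1.le.trans h2
  filter_upwards [hev] with p hp
  exact EReal.coe_le_coe_iff.mpr hp

/-- Proposition 3.1: lower estimate for the second subderivative of a
spectral function. -/
theorem second_subderiv_lower_estimate {n : ℕ} (θ : (Fin n → ℝ) → EReal)
    (X Y : Sym n) (U : Matrix (Fin n) (Fin n) ℝ) (y v : Fin n → ℝ) (σ : Equiv.Perm (Fin n))
    (hsym : SymmetricFn θ) (hlsc : LowerSemicontinuous (specFn θ))
    (hY : LimSubgrad ipM (specFn θ) X Y)
    (hU : U ∈ eigOrth X.val)
    (hy : LimSubgrad ipV θ (eigval X.val) y)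
    (hYdec : Y.val = U * Matrix.diagonal y * Uᵀ)
    (hσblock : ∀ i, eigval X.val (σ i) = eigval X.val i)
    (hv : ∀ i, v i = y (σ i))
    (hvdec : ∀ i j : Fin n, i ≤ j → eigval X.val i = eigval X.val j → v j ≤ v i) :
    ∀ H : Sym n,
      subderiv2 ipV θ (eigval X.val) v (lambdaDir X.val U H.val)
          + ((curvTerm X.val U H.val y : ℝ) : EReal)
        ≤ subderiv2 ipM (specFn θ) X Y H := by
  intro H
  refine (add_le_add_right
    (curv_liminf X H U y v σ hU hσblock hv hvdec) _).trans ?_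
  have h1 : subderiv2 ipV θ (eigval X.val) v (lambdaDir X.val U H.val)
      ≤ liminf (fun p : ℝ × Sym n => sdq2 ipV θ (eigval X.val) v p.1 (wq X p))
        (𝓝[>] (0 : ℝ) ×ˢ 𝓝 H) :=
    liminf_le_liminf_of_le (g := map (fun p : ℝ × Sym n => (p.1, wq X p)) (𝓝[>] (0 : ℝ) ×ˢ 𝓝 H))
      (u := fun q : ℝ × (Fin n → ℝ) => sdq2 ipV θ (eigval X.val) v q.1 q.2)
      (wq_tendsto X H U hU)
  refine (add_le_add_left h1 _).trans (EReal.le_liminf_add.trans ?_)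
  refine le_of_eq (liminf_congr ?_)
  have hpos : ∀ᶠ p : ℝ × Sym n in 𝓝[>] (0 : ℝ) ×ˢ 𝓝 H, 0 < p.1 :=
    tendsto_fst.eventually self_mem_nhdsWithin
  filter_upwards [hpos] with p hp
  exact (sdq2_split θ X Y U y v hYdec p hp).symm

end SpecPaper
end
end
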